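/- Let {a_d}_{d∈ℕ} be a sluggish sequence. There exist constants c₃, C₃ > 0 (depending on {a_d}) and measurable sets 𝒜_d ⊂ ℝ^d such that for all d ∈ ℕ: ρ_d(ℝ^d ∖ 𝒜_d) ≤ c₃·e^{−a_d²}, and for every f ∈ S³ and every x = (x₁,…,x_d) ∈ 𝒜_d, |G f(x₁) − G_d f(x)| ≤ C₃·(Σ_{i=1}^3 ‖f^{(i)}‖_{∞,1/2})·e^{|x₁|}·a_d/√d. -/

import Mathlib

/-!
The difference of the generators is estimated directly, without an intermediate polynomial
approximation of the log-ratio.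

Write `L = log ρ`, `σ = l / √d` and `γ` for the standard Gaussian. Standardising the proposal and
integrating out the coordinates `2, …, d` first gives (`Gd_eq`)
`G_d f(x) = d ∫ (f(x₁ + σ t) - f(x₁)) F(D(t)) dγ(t)`, where `D(t) = L(x₁ + σ t) - L(x₁)`,
`F(u) = E acc(u + S)`, `acc u = min 1 (e^u)`, and `S` is the log-ratio of the other coordinates.

*Law of `S`.* Given `x`, `S` is a sum of functions of independent Gaussians, each close to a
polynomial `b z + q z²`. Stein's method (`stein_sum`), based on the bounded solution of Stein's
equation (`stein_solution'`) and on Gaussian integration by parts in each coordinate, compares `S`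
with `N(m, v)` on bounded continuous test functions; the error is governed by `|∑ b² - v|`,
`|∑ q - m|` and Taylor remainders. Here `∑ b² = σ² ∑ L'(x_i)²` and `∑ q = σ²/2 ∑ L''(x_i)`. Since
`ρ(L'²) = J` and `ρ(L'') = -J` (`integral_d2l`), the limit is `N(-l²J/2, l²J)`, with an error
`O(a_d / √d)` as soon as `x` belongs to the typical set `Good`, on which the empirical sums of
`L'²`, `L''` and `e^{|·|}` are within `K a_d √d` of their means (`stein_good`).

*Typical sets.* These sums have all moments but, in general, no exponential moments. Each variable is
truncated at `d^{1/4}`; the truncated sum is handled by a Chernoff bound with parameter `a_d / √d`,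
and a truncation occurs with probability at most any power of `1 / d`, which is `O(e^{-a_d²})`
because `a_d² = O(log d)` (`conc`, `good_prob`).

*Expansion.* For `S ~ N(-v/2, v)` one has `E acc(S) = 2 p` and `E acc(u + S) = 2 p + p u + O(u²)`
with `p = Φ(-√v/2)` (`gauss_acc`, `gauss_acc_taylor`). Combined with the total variation estimate,
`F(0) = 2 p + O(δ)` and `F(u) - F(0) = p u + O(|u| δ + u²)` with `δ = O(a_d / √d)`. Inserting the
Taylor expansions of `f` and `L` at scale `σ` and using `∫ t dγ = 0`, `∫ t² dγ = 1`, the main term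
is `l² p (f'' + L' f') = G f` (`generator_bound`). The remainder is `O(1 / √d + δ)`, and `1 / √d` is
absorbed in `a_d / √d` because `a` is bounded below.
-/

open MeasureTheory ProbabilityTheory Filter Set

noncomputable section

/-- The exponentially-weighted sup-norm `‖g‖_{∞,s} = sup_x e^{-s|x|} |g x|`. -/
def normIS (g : ℝ → ℝ) (s : ℝ) : ℝ := ⨆ x : ℝ, Real.exp (-(s * |x|)) * |g x|

/-- Membership in the space `Sⁿ`: `n`-times continuously differentiable with all
iterated derivatives up to order `n` of sub-exponential growth. -/
def MemS (n : ℕ) (g : ℝ → ℝ) : Prop :=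
  ContDiff ℝ n g ∧ ∀ s > (0:ℝ), ∀ i ≤ n,
    BddAbove (Set.range fun x => Real.exp (-(s * |x|)) * |iteratedDeriv i g x|)

/-- A positive sequence is sluggish if it tends to infinity but `a d / √(log d)` stays bounded. -/
def Sluggish (a : ℕ → ℝ) : Prop :=
  (∀ d, 0 < a d) ∧ Tendsto a atTop atTop ∧
    ∃ M : ℝ, ∀ d : ℕ, 2 ≤ d → a d / Real.sqrt (Real.log d) ≤ M

/-- `(log ρ)'` -/
def dl (ρ : ℝ → ℝ) : ℝ → ℝ := deriv fun x => Real.log (ρ x)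

/-- `(log ρ)''` -/
def d2l (ρ : ℝ → ℝ) : ℝ → ℝ := deriv (dl ρ)

/-- `ρ(g) = ∫ g dρ` -/
def rhoE (ρ g : ℝ → ℝ) : ℝ := ∫ x, g x * ρ x

/-- `J = ρ(((log ρ)')²)` -/
def Jc (ρ : ℝ → ℝ) : ℝ := rhoE ρ fun x => (dl ρ x) ^ 2

/-- super-exponential tails: `(x/|x|)·(log ρ)'(x) → -∞` as `|x| → ∞`. -/
def SuperExpTails (ρ : ℝ → ℝ) : Prop :=
  Tendsto (dl ρ) atTop atBot ∧ Tendsto (dl ρ) atBot atTop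

/-- standard normal CDF -/
def stdCDF (t : ℝ) : ℝ := ((gaussianReal 0 1) (Set.Iic t)).toReal

/-- the constant `h(l) = 2l²Φ(-l√J/2)` -/
def hc (ρ : ℝ → ℝ) (l : ℝ) : ℝ := 2 * l ^ 2 * stdCDF (-(l * Real.sqrt (Jc ρ)) / 2)

/-- the limiting (Langevin) generator `G f = (h(l)/2)(f'' + (log ρ)' f')` -/
def Gop (ρ : ℝ → ℝ) (l : ℝ) (f : ℝ → ℝ) (x : ℝ) : ℝ :=
  hc ρ l / 2 * (deriv (deriv f) x + dl ρ x * deriv f x)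

/-- the product measure `ρ_d` on `ℝ^d` -/
def pm (ρ : ℝ → ℝ) (d : ℕ) : Measure (Fin d → ℝ) :=
  Measure.pi fun _ => volume.withDensity fun x => ENNReal.ofReal (ρ x)

/-- law of the proposal `Y ~ N(x, l²/d · I_d)` -/
def gaussPi (l : ℝ) (d : ℕ) (x : Fin d → ℝ) : Measure (Fin d → ℝ) :=
  Measure.pi fun i => gaussianReal (x i) ((l ^ 2 / (d:ℝ)).toNNReal)

/-- the RWM generator `G_d` -/
def Gd (ρ : ℝ → ℝ) (l : ℝ) (d : ℕ) [NeZero d] (f : ℝ → ℝ) (x : Fin d → ℝ) : ℝ :=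
  (d:ℝ) * ∫ y, (f (y 0) - f (x 0)) * min 1 ((∏ i, ρ (y i)) / ∏ i, ρ (x i)) ∂(gaussPi l d x)

/-- the set `A` associated with the constant `c_A` -/
def Aset (ρ : ℝ → ℝ) (c : ℝ) : Set ℝ :=
  {x | |d2l ρ x| < (dl ρ x) ^ 2 ∧ 1 / c < |dl ρ x| ∧ |dl ρ x| < c}

/-- indices `2,…,d` (all coordinates except the first) -/
def restIdx (d : ℕ) : Finset (Fin d) := Finset.univ.filter fun i => (i : ℕ) ≠ 0

/-- the typical sets `𝒜_d` -/
def Ad (ρ : ℝ → ℝ) (c : ℝ) (a : ℕ → ℝ) (d : ℕ) : Set (Fin d → ℝ) :=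
  {x | (1 / ((d : ℝ) - 1)) * ∑ i ∈ restIdx d, Real.exp |x i| < 2 * rhoE ρ (fun t => Real.exp |t|)
    ∧ (∫ t in Aset ρ c, ρ t) / 2 <
        (1 / ((d : ℝ) - 1)) * ∑ i ∈ restIdx d, (Aset ρ c).indicator (fun _ => (1:ℝ)) (x i)
    ∧ (1 / ((d : ℝ) - 1)) * |∑ i ∈ restIdx d, ((dl ρ (x i)) ^ 2 - Jc ρ)| <
        a d / Real.sqrt d * Real.sqrt (3 * rhoE ρ fun t => ((dl ρ t) ^ 2 - Jc ρ) ^ 2)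
    ∧ (1 / ((d : ℝ) - 1)) * |∑ i ∈ restIdx d, (d2l ρ (x i) + Jc ρ)| <
        a d / Real.sqrt d * Real.sqrt (3 * rhoE ρ fun t => (d2l ρ t + Jc ρ) ^ 2)}

/-- `K(x,y)` -/
def Kf (ρ : ℝ → ℝ) (c : ℝ) (x y : ℝ) : ℝ :=
  dl ρ x * (y - x) + d2l ρ x / 2 * (y - x) ^ 2
    + (dl ρ x) ^ 3 * (Aset ρ c).indicator (fun _ => (1:ℝ)) x / 3 * (y - x) ^ 3

/-- `Σ_{i=2}^d K(x_i, Y_i)` -/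
def SK (ρ : ℝ → ℝ) (c : ℝ) (d : ℕ) (x Y : Fin d → ℝ) : ℝ :=
  ∑ i ∈ restIdx d, Kf ρ c (x i) (Y i)

/-- `β(x,y)` -/
def betaF (ρ : ℝ → ℝ) (c l : ℝ) (d : ℕ) [NeZero d] (x : Fin d → ℝ) (y : ℝ) : ℝ :=
  ∫ Y, min 1 (Real.exp (dl ρ (x 0) * (y - x 0) + SK ρ c d x Y)) ∂(gaussPi l d x)

/-- `G̃_d` -/
def tGd (ρ : ℝ → ℝ) (c l : ℝ) (d : ℕ) [NeZero d] (f : ℝ → ℝ) (x : Fin d → ℝ) : ℝ :=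
  (d:ℝ) * ∫ y, (f y - f (x 0)) * betaF ρ c l d x y
    ∂(gaussianReal (x 0) ((l ^ 2 / (d:ℝ)).toNNReal))

/-- `Ĝ_d` -/
def hGd (ρ : ℝ → ℝ) (c l : ℝ) (d : ℕ) [NeZero d] (f : ℝ → ℝ) (x : Fin d → ℝ) : ℝ :=
  l ^ 2 / 2 * deriv (deriv f) (x 0) * (∫ Y, min 1 (Real.exp (SK ρ c d x Y)) ∂(gaussPi l d x))
    + l ^ 2 * deriv f (x 0) * dl ρ (x 0) *
      (∫ Y, (Set.Iio (0:ℝ)).indicator Real.exp (SK ρ c d x Y) ∂(gaussPi l d x))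

/-- `𝒩(x,Y)` -/
def Nf (ρ : ℝ → ℝ) (l : ℝ) (d : ℕ) (x Y : Fin d → ℝ) : ℝ :=
  l ^ 2 / (2 * (d:ℝ)) * ∑ i ∈ restIdx d, d2l ρ (x i)
    + ∑ i ∈ restIdx d, dl ρ (x i) * (Y i - x i)

/-- `Ğ_d` -/
def bGd (ρ : ℝ → ℝ) (l : ℝ) (d : ℕ) [NeZero d] (f : ℝ → ℝ) (x : Fin d → ℝ) : ℝ :=
  l ^ 2 / 2 * deriv (deriv f) (x 0) * (∫ Y, min 1 (Real.exp (Nf ρ l d x Y)) ∂(gaussPi l d x))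
    + l ^ 2 * deriv f (x 0) * dl ρ (x 0) *
      (∫ Y, (Set.Iio (0:ℝ)).indicator Real.exp (Nf ρ l d x Y) ∂(gaussPi l d x))

/-! ### Gaussian integration by parts and Stein's equation -/

/-- The standard Gaussian measure on `ℝ`. -/
abbrev stdG : Measure ℝ := gaussianReal 0 1

lemma integrable_exp_abs (c : ℝ) : Integrable (fun z : ℝ => Real.exp (c * |z|)) stdG :=
  integrable_exp_mul_abs (integrable_exp_mul_gaussianReal c) (integrable_exp_mul_gaussianReal (-c))

lemma abs_le_exp_abs (z : ℝ) : |z| ≤ Real.exp |z| := by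
  linarith [Real.add_one_le_exp |z|]

lemma integrable_of_exp_bound {C c : ℝ} {G : ℝ → ℝ} (hG : AEStronglyMeasurable G stdG)
    (hb : ∀ z, |G z| ≤ C * Real.exp (c * |z|)) : Integrable G stdG :=
  Integrable.mono' ((integrable_exp_abs c).const_mul C) hG (ae_of_all _ hb)

lemma integrable_pdf_mul {f : ℝ → ℝ} (hf : Integrable f stdG) :
    Integrable fun x => gaussianPDFReal 0 1 x * f x := by
  have h1 : Integrable f (volume.withDensity (gaussianPDF 0 1)) := by
    rwa [stdG, gaussianReal_of_var_ne_zero _ one_ne_zero] at hf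
  have := (integrable_withDensity_iff_integrable_smul' (measurable_gaussianPDF 0 1)
    (ae_of_all _ fun x => by simp [gaussianPDF])).1 h1
  refine this.congr (ae_of_all _ fun x => ?_)
  simp [gaussianPDF, ENNReal.toReal_ofReal (gaussianPDFReal_nonneg 0 1 x)]

lemma hasDerivAt_pdf (x : ℝ) :
    HasDerivAt (gaussianPDFReal 0 1) (-x * gaussianPDFReal 0 1 x) x := by
  have h : HasDerivAt (fun x : ℝ => -(x - 0) ^ 2 / (2 * ((1 : NNReal) : ℝ))) (-x) x := by
    have := ((((hasDerivAt_id x).sub_const 0).pow 2).neg).div_const (2 * ((1 : NNReal) : ℝ))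
    refine this.congr_deriv ?_
    simp; ring
  have := (h.exp).const_mul (√(2 * Real.pi * ((1 : NNReal) : ℝ)))⁻¹
  rw [gaussianPDFReal_def]
  refine this.congr_deriv ?_
  ring

lemma integral_stdG (f : ℝ → ℝ) : ∫ z, f z ∂stdG = ∫ z, gaussianPDFReal 0 1 z * f z := by
  simp [stdG, integral_gaussianReal_eq_integral_smul (one_ne_zero)]

/-- Gaussian integration by parts (Stein's lemma) for functions of exponential growth. -/
lemma stein_ibp {G G' : ℝ → ℝ} {C c : ℝ} (hG : ∀ z, HasDerivAt G (G' z) z) (hG' : Continuous G')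
    (hb : ∀ z, |G z| ≤ C * Real.exp (c * |z|)) (hb' : ∀ z, |G' z| ≤ C * Real.exp (c * |z|)) :
    ∫ z, z * G z ∂stdG = ∫ z, G' z ∂stdG := by
  have hGc : Continuous G := continuous_iff_continuousAt.2 fun z => (hG z).continuousAt
  have iG : Integrable G stdG := integrable_of_exp_bound hGc.aestronglyMeasurable hb
  have iG' : Integrable G' stdG := integrable_of_exp_bound hG'.aestronglyMeasurable hb'
  have izG : Integrable (fun z => z * G z) stdG := by
    refine integrable_of_exp_bound (C := C) (c := c + 1)
      (continuous_id.mul hGc).aestronglyMeasurable fun z => ?_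
    rw [abs_mul, add_mul, one_mul, Real.exp_add]
    calc |z| * |G z| ≤ Real.exp |z| * (C * Real.exp (c * |z|)) := by
          gcongr
          · exact abs_le_exp_abs z
          · exact hb z
      _ = _ := by ring
  have key := integral_eq_zero_of_hasDerivAt_of_integrable
    (f := fun z => gaussianPDFReal 0 1 z * G z)
    (f' := fun z => gaussianPDFReal 0 1 z * G' z - gaussianPDFReal 0 1 z * (z * G z))
    (fun z => ((hasDerivAt_pdf z).mul (hG z)).congr_deriv (by ring))
    ((integrable_pdf_mul iG').sub (integrable_pdf_mul izG)) (integrable_pdf_mul iG)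
  rw [integral_sub (integrable_pdf_mul iG') (integrable_pdf_mul izG)] at key
  rw [integral_stdG, integral_stdG]
  linarith

/-- The affine image of the standard Gaussian. -/
lemma map_stdG (m s : ℝ) :
    stdG.map (fun z => m + s * z) = gaussianReal m ((s ^ 2).toNNReal) := by
  have h : (fun z : ℝ => m + s * z) = (fun z => m + z) ∘ fun z => s * z := rfl
  rw [h, ← Measure.map_map (by fun_prop) (by fun_prop), stdG, gaussianReal_map_const_mul,
    gaussianReal_map_const_add]
  congr 1
  · simp
  · ext; simp [Real.coe_toNNReal _ (sq_nonneg s)]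

/-- Tail estimate behind the boundedness of the solution of Stein's equation. -/
lemma tail_bound {k : ℝ → ℝ} {B : ℝ} (hk : Continuous k) (hB : ∀ z, |k z| ≤ B) {w : ℝ}
    (hw : 0 ≤ w) :
    w * |∫ t in Ioi w, Real.exp (-t ^ 2 / 2) * k t| ≤ B * Real.exp (-w ^ 2 / 2) := by
  have hB0 : 0 ≤ B := (abs_nonneg _).trans (hB 0)
  have hexp : Integrable fun t : ℝ => Real.exp (-t ^ 2 / 2) := by
    refine (integrable_exp_neg_mul_sq (b := 1 / 2) (by norm_num)).congr
      (ae_of_all _ fun t => ?_)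
    simp only; congr 1; ring
  have hd : ∀ t : ℝ, HasDerivAt (fun t : ℝ => -Real.exp (-t ^ 2 / 2))
      (t * Real.exp (-t ^ 2 / 2)) t := fun t => by
    have := ((((hasDerivAt_id t).pow 2).neg).div_const 2).exp.neg
    refine this.congr_deriv ?_
    simp; ring
  have ht : Tendsto (fun t : ℝ => -Real.exp (-t ^ 2 / 2)) atTop (nhds 0) := by
    have : Tendsto (fun t : ℝ => t ^ 2 / 2) atTop atTop :=
      (tendsto_pow_atTop two_ne_zero).atTop_div_const (by norm_num)
    have h2 := (Real.tendsto_exp_neg_atTop_nhds_zero.comp this).neg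
    simpa [Function.comp_def, neg_div] using h2
  have hti : IntegrableOn (fun t : ℝ => t * Real.exp (-t ^ 2 / 2)) (Ioi w) := by
    refine integrableOn_Ioi_deriv_of_nonneg' (fun t _ => hd t) (fun t h => ?_) ht
    exact mul_nonneg (hw.trans h.out.le) (Real.exp_pos _).le
  have hint := integral_Ioi_of_hasDerivAt_of_tendsto' (a := w) (fun t _ => hd t) hti ht
  have hki : Integrable fun t : ℝ => Real.exp (-t ^ 2 / 2) * k t :=
    hexp.mul_bdd hk.aestronglyMeasurable (c := B) (ae_of_all _ hB)
  calc w * |∫ t in Ioi w, Real.exp (-t ^ 2 / 2) * k t|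
      ≤ w * ∫ t in Ioi w, |Real.exp (-t ^ 2 / 2) * k t| := by
        gcongr; exact abs_integral_le_integral_abs
    _ = ∫ t in Ioi w, w * |Real.exp (-t ^ 2 / 2) * k t| := by rw [integral_const_mul]
    _ ≤ ∫ t in Ioi w, B * (t * Real.exp (-t ^ 2 / 2)) := by
        refine setIntegral_mono_on (hki.abs.const_mul w).integrableOn (hti.const_mul B)
          measurableSet_Ioi fun t h => ?_
        rw [abs_mul, abs_of_pos (Real.exp_pos _)]
        calc w * (Real.exp (-t ^ 2 / 2) * |k t|) ≤ t * (Real.exp (-t ^ 2 / 2) * B) := by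
              gcongr
              · exact hw.trans h.out.le
              · exact h.out.le
              · exact hB t
          _ = _ := by ring
    _ = B * Real.exp (-w ^ 2 / 2) := by rw [integral_const_mul, hint]; ring

/-- Bounded solution of Stein's equation `g' - w g = h - E h(N)` for the standard Gaussian. -/
lemma stein_solution {h : ℝ → ℝ} (hc : Continuous h) (hb : ∀ z, |h z| ≤ 1) :
    ∃ g g' : ℝ → ℝ, (∀ w, HasDerivAt g (g' w) w) ∧ Continuous g' ∧ (∀ w, |g w| ≤ 30) ∧
      (∀ w, |g' w| ≤ 30) ∧ ∀ w, g' w - w * g w = h w - ∫ z, h z ∂stdG := by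
  set e := ∫ z, h z ∂stdG with he
  have he1 : |e| ≤ 1 := by
    have := norm_integral_le_of_norm_le_const (μ := stdG) (f := h) (C := 1) (ae_of_all _ hb)
    simpa using this
  set k : ℝ → ℝ := fun w => h w - e with hk
  have hkc : Continuous k := hc.sub continuous_const
  have hkb : ∀ z, |k z| ≤ 2 := fun z => by
    have := abs_sub (h z) e
    have := hb z
    simp only [hk]; linarith
  have hexp : Integrable fun t : ℝ => Real.exp (-t ^ 2 / 2) := by
    refine (integrable_exp_neg_mul_sq (b := 1 / 2) (by norm_num)).congr
      (ae_of_all _ fun t => ?_)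
    simp only; congr 1; ring
  set q : ℝ → ℝ := fun t => Real.exp (-t ^ 2 / 2) * k t with hq
  have hqc : Continuous q := by fun_prop
  have hqi : Integrable q := hexp.mul_bdd hkc.aestronglyMeasurable (c := 2) (ae_of_all _ hkb)
  have hq0 : ∫ t, q t = 0 := by
    have h0 : ∫ z, k z ∂stdG = 0 := by
      have hi : Integrable h stdG := Integrable.of_bound hc.aestronglyMeasurable 1 (ae_of_all _ hb)
      rw [hk, integral_sub hi (integrable_const _)]
      simp [he]
    rw [integral_stdG] at h0
    have : ∀ z, gaussianPDFReal 0 1 z * k z = (√(2 * Real.pi))⁻¹ * q z := fun z => by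
      simp [gaussianPDFReal_def, hq, mul_assoc]
    simp_rw [this] at h0
    rw [integral_const_mul] at h0
    rcases mul_eq_zero.1 h0 with h0 | h0
    · exact absurd h0 (by positivity)
    · exact h0
  set I : ℝ → ℝ := fun w => ∫ t in Iic w, q t with hI
  have hId : ∀ w, HasDerivAt I (q w) w := fun w => by
    have : ∀ w, I w = I 0 + ∫ t in (0:ℝ)..w, q t := fun w => by
      rw [← intervalIntegral.integral_Iic_sub_Iic hqi.integrableOn hqi.integrableOn]
      ring
    have h1 := (intervalIntegral.integral_hasDerivAt_right (hqc.intervalIntegrable 0 w)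
      hqc.stronglyMeasurable.stronglyMeasurableAtFilter hqc.continuousAt).const_add (I 0)
    exact h1.congr_of_eventuallyEq (Eventually.of_forall this)
  have hIneg : ∀ w, I w = -∫ t in Ioi w, q t := fun w => by
    have := intervalIntegral.integral_Iic_add_Ioi (b := w) hqi.integrableOn hqi.integrableOn
    simp only [hI]; linarith
  have hwI : ∀ w, |w| * |I w| ≤ 2 * Real.exp (-w ^ 2 / 2) := fun w => by
    rcases le_total 0 w with hw | hw
    · rw [abs_of_nonneg hw, hIneg, abs_neg]
      exact tail_bound hkc hkb hw
    · rw [abs_of_nonpos hw]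
      have h1 := tail_bound (k := fun t => k (-t)) (by fun_prop) (fun z => hkb (-z))
        (w := -w) (by linarith)
      have h2 : ∫ t in Ioi (-w), Real.exp (-t ^ 2 / 2) * k (-t) = I w := by
        rw [hI]
        simp only
        rw [← neg_neg w, ← integral_comp_neg_Ioi, neg_neg]
        simp [hq]
      rw [h2] at h1
      simpa using h1
  have hIb : ∀ w, |I w| ≤ 6 := fun w => by
    calc |I w| ≤ ∫ t in Iic w, |q t| := abs_integral_le_integral_abs
      _ ≤ ∫ t, |q t| := setIntegral_le_integral hqi.abs (ae_of_all _ fun t => abs_nonneg _)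
      _ ≤ ∫ t : ℝ, Real.exp (-(1/2) * t ^ 2) * 2 := by
        refine integral_mono hqi.abs
          ((integrable_exp_neg_mul_sq (b := 1 / 2) (by norm_num)).mul_const 2) fun t => ?_
        simp only [hq]
        rw [abs_mul, abs_of_pos (Real.exp_pos _)]
        have : -t ^ 2 / 2 = -(1/2) * t ^ 2 := by ring
        rw [this]
        gcongr
        exact hkb t
      _ = √(2 * Real.pi) * 2 := by
        rw [integral_mul_const, integral_gaussian]; congr 2; ring
      _ ≤ 6 := by
        have : √(2 * Real.pi) ≤ 3 := by
          rw [Real.sqrt_le_left (by norm_num)]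
          linarith [Real.pi_lt_four]
        linarith
  set g : ℝ → ℝ := fun w => Real.exp (w ^ 2 / 2) * I w with hg
  have hee : ∀ w : ℝ, Real.exp (w ^ 2 / 2) * Real.exp (-w ^ 2 / 2) = 1 := fun w => by
    rw [← Real.exp_add]; simp [neg_div]
  have hgd : ∀ w, HasDerivAt g (k w + w * g w) w := fun w => by
    have h1 : HasDerivAt (fun w : ℝ => Real.exp (w ^ 2 / 2)) (w * Real.exp (w ^ 2 / 2)) w := by
      have := (((hasDerivAt_id w).pow 2).div_const 2).exp
      refine this.congr_deriv ?_
      simp; ring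
    refine (h1.mul (hId w)).congr_deriv ?_
    simp only [hg, hq]
    linear_combination (k w) * hee w
  have hgc : Continuous g := continuous_iff_continuousAt.2 fun z => (hgd z).continuousAt
  have hwg : ∀ w, |w * g w| ≤ 2 := fun w => by
    simp only [hg]
    rw [abs_mul, abs_mul, abs_of_pos (Real.exp_pos _)]
    calc |w| * (Real.exp (w ^ 2 / 2) * |I w|) = Real.exp (w ^ 2 / 2) * (|w| * |I w|) := by ring
      _ ≤ Real.exp (w ^ 2 / 2) * (2 * Real.exp (-w ^ 2 / 2)) :=
          mul_le_mul_of_nonneg_left (hwI w) (Real.exp_pos _).le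
      _ = 2 := by linear_combination 2 * hee w
  refine ⟨g, fun w => k w + w * g w, hgd, by fun_prop, fun w => ?_, fun w => ?_, fun w => ?_⟩
  · rcases le_total 1 |w| with hw | hw
    · have := hwg w
      rw [abs_mul] at this
      nlinarith [abs_nonneg (g w)]
    · simp only [hg]
      rw [abs_mul, abs_of_pos (Real.exp_pos _)]
      have h1 : w ^ 2 / 2 ≤ 1 := by
        have : w ^ 2 ≤ 1 := by rw [← sq_abs]; nlinarith [abs_nonneg w]
        linarith
      have h2 : Real.exp (w ^ 2 / 2) ≤ 3 :=
        (Real.exp_le_exp.2 h1).trans (by linarith [Real.exp_one_lt_d9])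
      nlinarith [hIb w, abs_nonneg (I w), Real.exp_pos (w ^ 2 / 2)]
  · have := abs_add_le (k w) (w * g w)
    linarith [hkb w, hwg w]
  · simp [hk]

/-- Bounded solution of Stein's equation for `N(m, v)`; the bound depends only on `v`. -/
lemma stein_solution' {v : ℝ} (hv : 0 < v) : ∃ C > 0, ∀ (m : ℝ) (h : ℝ → ℝ), Continuous h →
    (∀ z, |h z| ≤ 1) →
    ∃ g g' : ℝ → ℝ, (∀ w, HasDerivAt g (g' w) w) ∧ Continuous g' ∧ (∀ w, |g w| ≤ C) ∧
      (∀ w, |g' w| ≤ C) ∧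
      ∀ w, v * g' w - (w - m) * g w = h w - ∫ z, h (m + √v * z) ∂stdG := by
  have hs : 0 < √v := Real.sqrt_pos.2 hv
  have hss : √v * √v = v := Real.mul_self_sqrt hv.le
  refine ⟨30 / √v + 30 / v, by positivity, fun m h hc hb => ?_⟩
  obtain ⟨g, g', h1, h2, h3, h4, h5⟩ := stein_solution (h := fun z => h (m + √v * z))
    (by fun_prop) (fun z => hb _)
  have hlin : ∀ w : ℝ, HasDerivAt (fun w => (w - m) / √v) (1 / √v) w := fun w =>
    ((hasDerivAt_id w).sub_const m).div_const _
  refine ⟨fun w => g ((w - m) / √v) / √v, fun w => g' ((w - m) / √v) / v, fun w => ?_,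
    by fun_prop, fun w => ?_, fun w => ?_, fun w => ?_⟩
  · have := ((h1 ((w - m) / √v)).comp w (hlin w)).div_const (√v)
    refine this.congr_deriv ?_
    rw [mul_one_div, div_div, hss]
  · rw [abs_div, abs_of_pos hs]
    have : |g ((w - m) / √v)| / √v ≤ 30 / √v := by gcongr; exact h3 _
    have : 0 < 30 / v := by positivity
    linarith
  · rw [abs_div, abs_of_pos hv]
    have : |g' ((w - m) / √v)| / v ≤ 30 / v := by gcongr; exact h4 _
    have : 0 < 30 / √v := by positivity
    linarith
  · have := h5 ((w - m) / √v)
    have e1 : m + √v * ((w - m) / √v) = w := by field_simp; ring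
    rw [e1] at this
    rw [← this]
    field_simp

/-! ### Integration by parts for the product Gaussian measure -/

/-- The standard Gaussian measure on `ℝ^ι`. -/
abbrev stdPi (ι : Type*) [Fintype ι] : Measure (ι → ℝ) := Measure.pi fun _ : ι => stdG

/-- Refreshing one coordinate of a product measure leaves the measure invariant. -/
lemma measurePreserving_update {ι : Type*} [Fintype ι] [DecidableEq ι] (μ : ι → Measure ℝ)
    [∀ i, IsProbabilityMeasure (μ i)] (i : ι) :
    MeasurePreserving (fun p : (ι → ℝ) × ℝ => Function.update p.1 i p.2)
      ((Measure.pi μ).prod (μ i)) (Measure.pi μ) := by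
  have hm : Measurable fun p : (ι → ℝ) × ℝ => Function.update p.1 i p.2 := by
    refine measurable_pi_lambda _ fun j => ?_
    by_cases h : j = i
    · subst h; simpa using measurable_snd
    · simp only [Function.update_of_ne h]
      exact (measurable_pi_apply j).comp measurable_fst
  refine ⟨hm, (Measure.pi_eq fun s hs => ?_).symm⟩
  rw [Measure.map_apply hm (MeasurableSet.univ_pi hs)]
  have : (fun p : (ι → ℝ) × ℝ => Function.update p.1 i p.2) ⁻¹' univ.pi s
      = (univ.pi (Function.update s i univ)) ×ˢ s i := by
    ext p
    simp only [mem_preimage, Set.mem_pi, mem_univ, true_imp_iff, mem_prod]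
    constructor
    · intro h
      refine ⟨fun j => ?_, by simpa using h i⟩
      by_cases hj : j = i
      · subst hj; simp
      · simpa [hj] using h j
    · rintro ⟨h1, h2⟩ j
      by_cases hj : j = i
      · subst hj; simpa using h2
      · simpa [hj] using h1 j
  rw [this, Measure.prod_prod, Measure.pi_pi, ← Finset.mul_prod_erase _ _ (Finset.mem_univ i),
    ← Finset.mul_prod_erase (Finset.univ) (fun j => μ j (s j)) (Finset.mem_univ i)]
  simp only [Function.update_self, measure_univ, one_mul]
  rw [mul_comm]
  congr 1
  refine Finset.prod_congr rfl fun j hj => ?_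
  rw [Function.update_of_ne (Finset.ne_of_mem_erase hj)]

lemma integral_update {ι : Type*} [Fintype ι] [DecidableEq ι] (i : ι) {F : (ι → ℝ) → ℝ}
    (hF : Integrable F (stdPi ι)) :
    ∫ z, F z ∂(stdPi ι) = ∫ z, ∫ t, F (Function.update z i t) ∂stdG ∂(stdPi ι) := by
  have hmp := measurePreserving_update (fun _ : ι => stdG) i
  rw [← integral_prod (f := fun p : (ι → ℝ) × ℝ => F (Function.update p.1 i p.2))]
  · conv_lhs => rw [stdPi, ← hmp.map_eq]
    rw [integral_map hmp.measurable.aemeasurable]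
    rw [hmp.map_eq]; exact hF.aestronglyMeasurable
  · exact hmp.integrable_comp_of_integrable hF

lemma integrable_eval {ι : Type*} [Fintype ι] (i : ι) {f : ℝ → ℝ} (hf : Integrable f stdG) :
    Integrable (fun z : ι → ℝ => f (z i)) (stdPi ι) :=
  (measurePreserving_eval (fun _ : ι => stdG) i).integrable_comp_of_integrable hf

lemma integral_eval {ι : Type*} [Fintype ι] (i : ι) {f : ℝ → ℝ} (hf : Integrable f stdG) :
    ∫ z : ι → ℝ, f (z i) ∂(stdPi ι) = ∫ t, f t ∂stdG := by
  have h := measurePreserving_eval (fun _ : ι => stdG) i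
  conv_rhs => rw [← h.map_eq]
  rw [integral_map h.measurable.aemeasurable]
  · rw [h.map_eq]; exact hf.aestronglyMeasurable

section SteinSum

variable {ι : Type*} [Fintype ι] [DecidableEq ι] (s : Finset ι) {u u' : ι → ℝ → ℝ}
  {g g' : ℝ → ℝ} {C κ : ℝ} {α : ι → ℝ}

/-- Integration by parts in one coordinate, with the factor `p z` equal to `1` or `z`. -/
lemma stein_coord (hu : ∀ i z, HasDerivAt (u i) (u' i z) z) (hu' : ∀ i, Continuous (u' i))
    (hα : ∀ i z, |u' i z| ≤ α i * Real.exp (κ * |z|)) (hκ : 0 ≤ κ)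
    (hg : ∀ w, HasDerivAt g (g' w) w) (hg' : Continuous g')
    (hgC : ∀ w, |g w| ≤ C) (hgC' : ∀ w, |g' w| ≤ C) {i : ι} (hi : i ∈ s) :
    (∫ z : ι → ℝ, z i * g (∑ j ∈ s, u j (z j)) ∂(stdPi ι)
      = ∫ z, u' i (z i) * g' (∑ j ∈ s, u j (z j)) ∂(stdPi ι)) ∧
    (∫ z : ι → ℝ, (z i ^ 2 - 1) * g (∑ j ∈ s, u j (z j)) ∂(stdPi ι)
      = ∫ z, z i * u' i (z i) * g' (∑ j ∈ s, u j (z j)) ∂(stdPi ι)) := by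
  have hC : 0 ≤ C := (abs_nonneg _).trans (hgC 0)
  have hα0 : 0 ≤ α i := by
    have := (abs_nonneg _).trans (hα i 0)
    simpa using this
  have huc : ∀ i, Continuous (u i) := fun i =>
    continuous_iff_continuousAt.2 fun z => (hu i z).continuousAt
  have hgc : Continuous g := continuous_iff_continuousAt.2 fun z => (hg z).continuousAt
  have hSc : Continuous fun z : ι → ℝ => ∑ j ∈ s, u j (z j) := by fun_prop
  have hE : ∀ c : ℝ, Integrable (fun z : ι → ℝ => Real.exp (c * |z i|)) (stdPi ι) := fun c =>
    integrable_eval i (integrable_exp_abs c)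
  have hup : ∀ (z : ι → ℝ) (t : ℝ), ∑ j ∈ s, u j (Function.update z i t j)
      = u i t + ∑ j ∈ s.erase i, u j (z j) := fun z t => by
    rw [← Finset.add_sum_erase _ _ hi, Function.update_self]
    congr 1
    refine Finset.sum_congr rfl fun j hj => ?_
    rw [Function.update_of_ne (Finset.ne_of_mem_erase hj)]
  have habs : ∀ t : ℝ, |t| ≤ Real.exp (1 * |t|) := fun t => by
    simpa using abs_le_exp_abs t
  have h1e : ∀ (c : ℝ) (t : ℝ), 0 ≤ c → 1 ≤ Real.exp (c * |t|) := fun c t hc =>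
    Real.one_le_exp (by positivity)
  -- integrability of the four integrands
  have i1 : Integrable (fun z : ι → ℝ => z i * g (∑ j ∈ s, u j (z j))) (stdPi ι) := by
    refine ((hE 1).const_mul C).mono' (by fun_prop) (ae_of_all _ fun z => ?_)
    rw [Real.norm_eq_abs, abs_mul, mul_comm C]
    gcongr
    · exact habs _
    · exact hgC _
  have i2 : Integrable (fun z : ι → ℝ => u' i (z i) * g' (∑ j ∈ s, u j (z j))) (stdPi ι) := by
    refine ((hE κ).const_mul (α i * C)).mono' (by fun_prop) (ae_of_all _ fun z => ?_)
    rw [Real.norm_eq_abs, abs_mul]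
    calc _ ≤ (α i * Real.exp (κ * |z i|)) * C := by
          gcongr
          · exact hα i _
          · exact hgC' _
      _ = _ := by ring
  have i3 : Integrable (fun z : ι → ℝ => (z i ^ 2 - 1) * g (∑ j ∈ s, u j (z j))) (stdPi ι) := by
    refine ((hE 2).const_mul (2 * C)).mono' (by fun_prop) (ae_of_all _ fun z => ?_)
    rw [Real.norm_eq_abs, abs_mul]
    have : |z i ^ 2 - 1| ≤ 2 * Real.exp (2 * |z i|) := by
      have h1 : z i ^ 2 ≤ Real.exp (2 * |z i|) := by
        rw [← sq_abs, two_mul, Real.exp_add, sq]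
        have := abs_le_exp_abs (z i)
        gcongr
      have h2 := h1e 2 (z i) (by norm_num)
      rw [abs_le]; constructor <;> nlinarith [sq_nonneg (z i)]
    calc _ ≤ (2 * Real.exp (2 * |z i|)) * C := by
          gcongr
          exact hgC _
      _ = _ := by ring
  have i4 : Integrable (fun z : ι → ℝ => z i * u' i (z i) * g' (∑ j ∈ s, u j (z j)))
      (stdPi ι) := by
    refine ((hE (κ + 1)).const_mul (α i * C)).mono' (by fun_prop) (ae_of_all _ fun z => ?_)
    rw [Real.norm_eq_abs, abs_mul, abs_mul, add_mul, Real.exp_add]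
    calc _ ≤ (Real.exp (1 * |z i|) * (α i * Real.exp (κ * |z i|))) * C := by
          gcongr
          · exact habs _
          · exact hα i _
          · exact hgC' _
      _ = _ := by ring
  rw [integral_update i i1, integral_update i i2, integral_update i i3, integral_update i i4]
  simp only [Function.update_self, hup]
  have hGd : ∀ (r t : ℝ), HasDerivAt (fun t => g (u i t + r)) (u' i t * g' (u i t + r)) t :=
    fun r t => ((hg _).comp t ((hu i t).add_const r)).congr_deriv (mul_comm _ _)
  constructor
  · refine integral_congr_ae (ae_of_all _ fun z => ?_)
    simp only
    generalize ∑ j ∈ s.erase i, u j (z j) = r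
    refine stein_ibp (C := C + α i * C) (c := κ) (hGd r) (by fun_prop) (fun t => ?_) fun t => ?_
    · calc |g (u i t + r)| ≤ C * 1 + 0 := by simpa using hgC _
        _ ≤ C * Real.exp (κ * |t|) + (α i * C) * Real.exp (κ * |t|) := by
            gcongr
            · exact h1e κ t hκ
            · positivity
        _ = _ := by ring
    · rw [abs_mul]
      calc _ ≤ (α i * Real.exp (κ * |t|)) * C := by
            gcongr
            · exact hα i _
            · exact hgC' _
        _ ≤ _ := by nlinarith [mul_nonneg hC (Real.exp_pos (κ * |t|)).le]
  · refine integral_congr_ae (ae_of_all _ fun z => ?_)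
    simp only
    generalize ∑ j ∈ s.erase i, u j (z j) = r
    have hint1 : Integrable (fun t => g (u i t + r)) stdG :=
      Integrable.of_bound (by fun_prop) C (ae_of_all _ fun t => hgC _)
    have key := stein_ibp (C := C + α i * C) (c := κ + 1)
      (G := fun t => t * g (u i t + r))
      (G' := fun t => g (u i t + r) + t * u' i t * g' (u i t + r))
      (fun t => ((hasDerivAt_id t).mul (hGd r t)).congr_deriv (by simp; ring)) (by fun_prop)
      (fun t => ?_) (fun t => ?_)
    · have hint2 : Integrable (fun t => t * u' i t * g' (u i t + r)) stdG := by
        refine integrable_of_exp_bound (C := α i * C) (c := κ + 1) (by fun_prop) fun t => ?_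
        rw [abs_mul, abs_mul, add_mul, Real.exp_add]
        calc _ ≤ (Real.exp (1 * |t|) * (α i * Real.exp (κ * |t|))) * C := by
              gcongr
              · exact habs _
              · exact hα i _
              · exact hgC' _
          _ = _ := by ring
      have hint3 : Integrable (fun t => t * (t * g (u i t + r))) stdG := by
        refine integrable_of_exp_bound (C := C) (c := 2) (by fun_prop) fun t => ?_
        rw [abs_mul, abs_mul, two_mul, Real.exp_add]
        calc _ ≤ Real.exp |t| * (Real.exp |t| * C) := by
              gcongr
              · exact abs_le_exp_abs t
              · exact abs_le_exp_abs t
              · exact hgC _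
          _ = _ := by ring
      rw [integral_add hint1 hint2] at key
      have e1 : ∀ t, (t ^ 2 - 1) * g (u i t + r) = t * (t * g (u i t + r)) - g (u i t + r) :=
        fun t => by ring
      simp_rw [e1]
      rw [integral_sub hint3 hint1, key]
      ring
    · rw [abs_mul, add_mul κ, Real.exp_add, one_mul]
      calc |t| * |g (u i t + r)| ≤ Real.exp |t| * C := by
            gcongr
            · exact abs_le_exp_abs t
            · exact hgC _
        _ = C * (1 * Real.exp |t|) + 0 := by ring
        _ ≤ C * (Real.exp (κ * |t|) * Real.exp |t|)
            + α i * C * (Real.exp (κ * |t|) * Real.exp |t|) := by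
            gcongr
            · exact h1e κ t hκ
            · positivity
        _ = _ := by ring
    · rw [add_mul C]
      refine (abs_add_le _ _).trans (add_le_add ?_ ?_)
      · calc |g (u i t + r)| ≤ C * 1 := by simpa using hgC _
          _ ≤ _ := by gcongr; exact h1e _ t (by positivity)
      · rw [abs_mul, abs_mul, add_mul, Real.exp_add]
        calc _ ≤ (Real.exp (1 * |t|) * (α i * Real.exp (κ * |t|))) * C := by
              gcongr
              · exact habs _
              · exact hα i _
              · exact hgC' _
          _ = _ := by ring

end SteinSum

/-! ### Stein's method for sums of functions of independent Gaussians -/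

/-- Stein's method for a sum of nonlinear functions of independent Gaussians: if each `u i` is
close to the polynomial `b i z + q i z²`, the law of `∑ u i (z i)` is close to `N(m, v)` when tested
against continuous functions bounded by `1`. -/
lemma stein_sum {v κ : ℝ} (hv : 0 < v) (hκ : 0 ≤ κ) : ∃ C > 0, ∀ (ι : Type) [Fintype ι]
    (s : Finset ι) (u u' : ι → ℝ → ℝ) (b q α β ε : ι → ℝ) (m : ℝ),
    (∀ i z, HasDerivAt (u i) (u' i z) z) → (∀ i, Continuous (u' i)) →
    (∀ i z, |u' i z| ≤ α i * Real.exp (κ * |z|)) →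
    (∀ i z, |u' i z - b i| ≤ β i * Real.exp (κ * |z|)) →
    (∀ i z, |u i z - b i * z - q i * z ^ 2| ≤ ε i * Real.exp (κ * |z|)) →
    ∀ h : ℝ → ℝ, Continuous h → (∀ z, |h z| ≤ 1) →
      |∫ z : ι → ℝ, h (∑ i ∈ s, u i (z i)) ∂(stdPi ι) - ∫ z, h (m + √v * z) ∂stdG|
        ≤ C * (|∑ i ∈ s, b i ^ 2 - v| + |∑ i ∈ s, q i - m|
          + ∑ i ∈ s, (|b i| * β i + |q i| * α i + ε i)) := by
  obtain ⟨C, hC, hst⟩ := stein_solution' hv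
  set M := ∫ z, Real.exp ((κ + 1) * |z|) ∂stdG with hM
  have h1M : 1 ≤ M := by
    have : ∫ z : ℝ, (1:ℝ) ∂stdG ≤ M := by
      refine integral_mono (integrable_const _) (integrable_exp_abs _) fun z => ?_
      exact Real.one_le_exp (by positivity)
    simpa using this
  refine ⟨C * M, by positivity, ?_⟩
  intro ι _ s u u' b q α β ε m hu hu' hα hβ hε h hhc hhb
  classical
  obtain ⟨g, g', hg, hg', hgC, hgC', heq⟩ := hst m h hhc hhb
  have huc : ∀ i, Continuous (u i) := fun i =>
    continuous_iff_continuousAt.2 fun z => (hu i z).continuousAt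
  have hgc : Continuous g := continuous_iff_continuousAt.2 fun z => (hg z).continuousAt
  set S : (ι → ℝ) → ℝ := fun z => ∑ i ∈ s, u i (z i) with hS
  have hSc : Continuous S := by fun_prop
  set r : ι → ℝ → ℝ := fun i z => u i z - b i * z - q i * z ^ 2 with hr
  have hrc : ∀ i, Continuous (r i) := fun i => by fun_prop
  -- integrability of a bounded function times a function of one coordinate
  have hI : ∀ (i : ι) (f : ℝ → ℝ) (B c : ℝ), Continuous f → (∀ z, |f z| ≤ B * Real.exp (c * |z|)) →
      ∀ k : ℝ → ℝ, Continuous k → (∀ w, |k w| ≤ C) →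
      Integrable (fun z : ι → ℝ => f (z i) * k (S z)) (stdPi ι) := by
    intro i f B c hf hfb k hk hkb
    have h1 := integrable_eval i (integrable_of_exp_bound hf.aestronglyMeasurable hfb)
    exact h1.mul_bdd (c := C) (by fun_prop) (ae_of_all _ fun z => hkb _)
  -- expectation bounds for the same products
  have hB : ∀ (i : ι) (f : ℝ → ℝ) (B : ℝ), Continuous f →
      (∀ z, |f z| ≤ B * Real.exp ((κ + 1) * |z|)) → ∀ k : ℝ → ℝ, (∀ w, |k w| ≤ C) →
      |∫ z : ι → ℝ, f (z i) * k (S z) ∂(stdPi ι)| ≤ C * M * B := by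
    intro i f B hf hfb k hkb
    have h2 : Integrable (fun t : ℝ => C * (B * Real.exp ((κ + 1) * |t|))) stdG :=
      ((integrable_exp_abs _).const_mul B).const_mul C
    have := norm_integral_le_of_norm_le (f := fun z : ι → ℝ => f (z i) * k (S z))
      (integrable_eval i h2) (ae_of_all _ fun z => ?_)
    · rw [integral_eval i h2, integral_const_mul, integral_const_mul] at this
      rw [Real.norm_eq_abs] at this
      linarith
    · rw [Real.norm_eq_abs, abs_mul, mul_comm C]
      gcongr
      · exact (abs_nonneg _).trans (hfb _)
      · exact hfb _
      · exact hkb _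
  have hmono : ∀ z : ℝ, Real.exp (κ * |z|) ≤ Real.exp ((κ + 1) * |z|) := fun z => by
    apply Real.exp_le_exp.2; nlinarith [abs_nonneg z]
  have hmono' : ∀ z : ℝ, |z| * Real.exp (κ * |z|) ≤ Real.exp ((κ + 1) * |z|) := fun z => by
    rw [add_mul, Real.exp_add, one_mul, mul_comm]
    gcongr; exact abs_le_exp_abs z
  have pos_of : ∀ {x : ℝ → ℝ} {B : ℝ}, (∀ z, |x z| ≤ B * Real.exp (κ * |z|)) → 0 ≤ B :=
    fun {x B} hx => by
      have := (abs_nonneg _).trans (hx 0)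
      simpa using this
  have hα0 : ∀ i, 0 ≤ α i := fun i => pos_of (hα i)
  have hβ0 : ∀ i, 0 ≤ β i := fun i => pos_of (hβ i)
  have hε0 : ∀ i, 0 ≤ ε i := fun i => pos_of (hε i)
  have hbz : ∀ z : ℝ, |z| ≤ 1 * Real.exp (1 * |z|) := fun z => by simpa using abs_le_exp_abs z
  have hz2 : ∀ z : ℝ, |z ^ 2 - 1| ≤ 2 * Real.exp (2 * |z|) := fun z => by
    have h1 : z ^ 2 ≤ Real.exp (2 * |z|) := by
      rw [← sq_abs, two_mul, Real.exp_add, sq]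
      have := abs_le_exp_abs z
      gcongr
    have h2 : 1 ≤ Real.exp (2 * |z|) := Real.one_le_exp (by positivity)
    rw [abs_le]; constructor <;> nlinarith [sq_nonneg z]
  have i1 : ∀ i, Integrable (fun z : ι → ℝ => z i * g (S z)) (stdPi ι) := fun i =>
    hI i (fun z => z) 1 1 continuous_id hbz g hgc hgC
  have i2 : ∀ i, Integrable (fun z : ι → ℝ => (z i ^ 2 - 1) * g (S z)) (stdPi ι) := fun i =>
    hI i (fun z => z ^ 2 - 1) 2 2 (by fun_prop) hz2 g hgc hgC
  have i3 : ∀ i, Integrable (fun z : ι → ℝ => r i (z i) * g (S z)) (stdPi ι) := fun i =>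
    hI i (r i) (ε i) κ (hrc i) (hε i) g hgc hgC
  have i4 : Integrable (fun z => g (S z)) (stdPi ι) :=
    Integrable.of_bound (by fun_prop) C (ae_of_all _ fun z => hgC _)
  have i5 : Integrable (fun z => g' (S z)) (stdPi ι) :=
    Integrable.of_bound (by fun_prop) C (ae_of_all _ fun z => hgC' _)
  have i6 : Integrable (fun z => h (S z)) (stdPi ι) :=
    Integrable.of_bound (by fun_prop) 1 (ae_of_all _ fun z => hhb _)
  have i7 : ∀ i, Integrable (fun z : ι → ℝ => (u' i (z i) - b i) * g' (S z)) (stdPi ι) := fun i =>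
    hI i (fun z => u' i z - b i) (β i) κ (by fun_prop) (hβ i) g' hg' hgC'
  -- the left-hand side is the expectation of the Stein operator
  have hL : ∫ z, h (S z) ∂(stdPi ι) - ∫ z, h (m + √v * z) ∂stdG
      = ∫ z, (h (S z) - ∫ z, h (m + √v * z) ∂stdG) ∂(stdPi ι) := by
    rw [integral_sub i6 (integrable_const _)]; simp
  have hpt : ∀ z, h (S z) - ∫ z, h (m + √v * z) ∂stdG
      = v * g' (S z) - (∑ i ∈ s, (b i * (z i * g (S z)) + q i * ((z i ^ 2 - 1) * g (S z))
          + r i (z i) * g (S z)) + (∑ i ∈ s, q i - m) * g (S z)) := fun z => by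
    rw [← heq, sub_right_inj]
    have : S z = ∑ i ∈ s, (b i * z i + q i * (z i ^ 2 - 1) + r i (z i) + q i) := by
      simp only [hS, hr]
      exact Finset.sum_congr rfl fun i _ => by ring
    have h2 : (S z - m) * g (S z) = (∑ i ∈ s, (b i * z i + q i * (z i ^ 2 - 1) + r i (z i))
        + (∑ i ∈ s, q i - m)) * g (S z) := by
      congr 1
      rw [this, Finset.sum_add_distrib]; ring
    rw [h2, add_mul, Finset.sum_mul]
    congr 1
    exact Finset.sum_congr rfl fun i _ => by ring
  have isum : Integrable (fun z : ι → ℝ => ∑ i ∈ s, (b i * (z i * g (S z))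
      + q i * ((z i ^ 2 - 1) * g (S z)) + r i (z i) * g (S z))) (stdPi ι) :=
    integrable_finsetSum _ fun i _ =>
      (((i1 i).const_mul (b i)).add ((i2 i).const_mul (q i))).add (i3 i)
  have hcoord : ∀ i ∈ s, ∫ z : ι → ℝ, (b i * (z i * g (S z))
      + q i * ((z i ^ 2 - 1) * g (S z)) + r i (z i) * g (S z)) ∂(stdPi ι)
      = b i ^ 2 * (∫ z, g' (S z) ∂(stdPi ι))
        + (b i * (∫ z : ι → ℝ, (u' i (z i) - b i) * g' (S z) ∂(stdPi ι))
        + q i * (∫ z : ι → ℝ, (z i * u' i (z i)) * g' (S z) ∂(stdPi ι))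
        + ∫ z : ι → ℝ, r i (z i) * g (S z) ∂(stdPi ι)) := by
    intro i hi
    obtain ⟨e1, e2⟩ := stein_coord s hu hu' hα hκ hg hg' hgC hgC' hi
    have j1 : ∫ z : ι → ℝ, z i * g (S z) ∂(stdPi ι)
        = b i * (∫ z, g' (S z) ∂(stdPi ι))
          + ∫ z : ι → ℝ, (u' i (z i) - b i) * g' (S z) ∂(stdPi ι) := by
      rw [← integral_const_mul, ← integral_add (i5.const_mul _) (i7 i)]
      refine e1.trans (integral_congr_ae (ae_of_all _ fun z => ?_))
      simp only [hS]; ring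
    have i12 : Integrable (fun z : ι → ℝ => b i * (z i * g (S z))
        + q i * ((z i ^ 2 - 1) * g (S z))) (stdPi ι) :=
      ((i1 i).const_mul (b i)).add ((i2 i).const_mul (q i))
    rw [integral_add i12 (i3 i), integral_add ((i1 i).const_mul (b i)) ((i2 i).const_mul (q i)),
      integral_const_mul, integral_const_mul, j1, e2]
    ring
  have i123 : ∀ i, Integrable (fun z : ι → ℝ => b i * (z i * g (S z))
      + q i * ((z i ^ 2 - 1) * g (S z)) + r i (z i) * g (S z)) (stdPi ι) := fun i =>
    (((i1 i).const_mul (b i)).add ((i2 i).const_mul (q i))).add (i3 i)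
  have isum' : Integrable (fun z : ι → ℝ => ∑ i ∈ s, (b i * (z i * g (S z))
      + q i * ((z i ^ 2 - 1) * g (S z)) + r i (z i) * g (S z))
      + (∑ i ∈ s, q i - m) * g (S z)) (stdPi ι) := isum.add (i4.const_mul _)
  rw [hL, integral_congr_ae (ae_of_all _ hpt), integral_sub (i5.const_mul v) isum', integral_add isum (i4.const_mul _),
    integral_finsetSum _ (fun i _ => i123 i),
    Finset.sum_congr rfl hcoord, integral_const_mul, integral_const_mul, Finset.sum_add_distrib,
    ← Finset.sum_mul]
  have hmain : |∑ i ∈ s, (b i * (∫ z : ι → ℝ, (u' i (z i) - b i) * g' (S z) ∂(stdPi ι))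
        + q i * (∫ z : ι → ℝ, (z i * u' i (z i)) * g' (S z) ∂(stdPi ι))
        + ∫ z : ι → ℝ, r i (z i) * g (S z) ∂(stdPi ι))|
      ≤ C * M * ∑ i ∈ s, (|b i| * β i + |q i| * α i + ε i) := by
    rw [Finset.mul_sum]
    refine (Finset.abs_sum_le_sum_abs _ _).trans (Finset.sum_le_sum fun i _ => ?_)
    have k1 := hB i (fun z => u' i z - b i) (β i) (by fun_prop)
      (fun z => (hβ i z).trans (mul_le_mul_of_nonneg_left (hmono z) (hβ0 i))) g' hgC'
    have k2 := hB i (fun z => z * u' i z) (α i) (by fun_prop) (fun z => by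
      rw [abs_mul]
      calc _ ≤ |z| * (α i * Real.exp (κ * |z|)) := by gcongr; exact hα i z
        _ = α i * (|z| * Real.exp (κ * |z|)) := by ring
        _ ≤ _ := mul_le_mul_of_nonneg_left (hmono' z) (hα0 i)) g' hgC'
    have k3 := hB i (r i) (ε i) (hrc i)
      (fun z => (hε i z).trans (mul_le_mul_of_nonneg_left (hmono z) (hε0 i))) g hgC
    refine (abs_add_le _ _).trans ?_
    refine (add_le_add_left (abs_add_le _ _) _).trans ?_
    rw [abs_mul, abs_mul]
    have k1' := mul_le_mul_of_nonneg_left k1 (abs_nonneg (b i))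
    have k2' := mul_le_mul_of_nonneg_left k2 (abs_nonneg (q i))
    linarith
  have bnd : ∀ k : ℝ → ℝ, (∀ w, |k w| ≤ C) → |∫ z, k (S z) ∂(stdPi ι)| ≤ C * M := by
    intro k hk
    have := norm_integral_le_of_norm_le_const (μ := stdPi ι) (f := fun z => k (S z)) (C := C)
      (ae_of_all _ fun z => hk _)
    simp only [Real.norm_eq_abs, probReal_univ, mul_one] at this
    nlinarith
  generalize (∑ i ∈ s, (b i * (∫ z : ι → ℝ, (u' i (z i) - b i) * g' (S z) ∂(stdPi ι))
        + q i * (∫ z : ι → ℝ, (z i * u' i (z i)) * g' (S z) ∂(stdPi ι))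
        + ∫ z : ι → ℝ, r i (z i) * g (S z) ∂(stdPi ι))) = X at hmain ⊢
  have b1 := bnd g hgC
  have b2 := bnd g' hgC'
  generalize ∫ z, g (S z) ∂(stdPi ι) = Y1 at b1 ⊢
  generalize ∫ z, g' (S z) ∂(stdPi ι) = Y2 at b2 ⊢
  have : v * Y2 - ((∑ i ∈ s, b i ^ 2) * Y2 + X + (∑ i ∈ s, q i - m) * Y1)
      = -(∑ i ∈ s, b i ^ 2 - v) * Y2 - X - (∑ i ∈ s, q i - m) * Y1 := by ring
  rw [this]
  refine (abs_sub _ _).trans ?_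
  refine (add_le_add_left (abs_sub _ _) _).trans ?_
  rw [abs_mul, abs_mul, abs_neg]
  have c1 := mul_le_mul_of_nonneg_left b2 (abs_nonneg (∑ i ∈ s, b i ^ 2 - v))
  have c2 := mul_le_mul_of_nonneg_left b1 (abs_nonneg (∑ i ∈ s, q i - m))
  linarith

/-! ### The acceptance function -/

/-- The Metropolis acceptance function `u ↦ min 1 (e^u)`. -/
def acc (u : ℝ) : ℝ := min 1 (Real.exp u)

lemma acc_nonneg (u : ℝ) : 0 ≤ acc u := le_min zero_le_one (Real.exp_pos u).le

lemma acc_le_one (u : ℝ) : acc u ≤ 1 := min_le_left _ _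

lemma abs_acc_le (u : ℝ) : |acc u| ≤ 1 := by
  rw [abs_of_nonneg (acc_nonneg u)]; exact acc_le_one u

lemma acc_of_nonneg {u : ℝ} (hu : 0 ≤ u) : acc u = 1 := min_eq_left (Real.one_le_exp hu)

lemma acc_of_nonpos {u : ℝ} (hu : u ≤ 0) : acc u = Real.exp u :=
  min_eq_right (Real.exp_le_one_iff.2 hu)

@[fun_prop]
lemma continuous_acc : Continuous acc := by unfold acc; fun_prop

lemma acc_mono {x y : ℝ} (h : x ≤ y) : acc x ≤ acc y :=
  min_le_min_left _ (Real.exp_le_exp.2 h)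

lemma acc_sub_le {x y : ℝ} (h : x ≤ y) : acc y - acc x ≤ y - x := by
  rcases le_total 0 x with hx | hx
  · rw [acc_of_nonneg hx, acc_of_nonneg (hx.trans h)]; linarith
  · have h1 : acc y ≤ 1 := acc_le_one y
    have h2 : acc y ≤ Real.exp y := min_le_right _ _
    rw [acc_of_nonpos hx]
    rcases le_total 0 y with hy | hy
    · have := Real.add_one_le_exp x; linarith
    · have e1 : Real.exp x = Real.exp y * Real.exp (x - y) := by rw [← Real.exp_add]; congr 1; ring
      have e2 := Real.add_one_le_exp (x - y)
      have e3 : Real.exp y ≤ 1 := Real.exp_le_one_iff.2 hy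
      rw [e1]
      nlinarith [Real.exp_pos y]

lemma abs_acc_sub_le (x y : ℝ) : |acc y - acc x| ≤ |y - x| := by
  rcases le_total x y with h | h
  · rw [abs_of_nonneg (sub_nonneg.2 (acc_mono h)), abs_of_nonneg (sub_nonneg.2 h)]
    exact acc_sub_le h
  · rw [abs_sub_comm, abs_sub_comm y, abs_of_nonneg (sub_nonneg.2 (acc_mono h)),
      abs_of_nonneg (sub_nonneg.2 h)]
    exact acc_sub_le h

/-- The almost-everywhere derivative of `acc`. -/
def acc' (s : ℝ) : ℝ := (Iio (0:ℝ)).indicator Real.exp s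

lemma measurable_acc' : Measurable acc' := Real.measurable_exp.indicator measurableSet_Iio

lemma acc'_nonneg (s : ℝ) : 0 ≤ acc' s := indicator_nonneg (fun x _ => (Real.exp_pos x).le) s

lemma acc'_le_one (s : ℝ) : acc' s ≤ 1 := by
  unfold acc'
  by_cases h : s < 0
  · rw [indicator_of_mem (by exact h)]; exact (Real.exp_le_one_iff.2 (le_of_lt h))
  · rw [indicator_of_notMem (by exact h)]; exact zero_le_one

/-- First-order expansion of `acc`; the second term accounts for the kink at `0`. -/
lemma acc_taylor (u s : ℝ) :
    |acc (u + s) - acc s - u * acc' s| ≤ u ^ 2 + 2 * |u| * (Icc (-|u|) |u|).indicator 1 s := by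
  have crude : |acc (u + s) - acc s - u * acc' s| ≤ 2 * |u| := by
    refine (abs_sub _ _).trans ?_
    have h1 := abs_acc_sub_le s (u + s)
    rw [add_sub_cancel_right] at h1
    rw [abs_mul, abs_of_nonneg (acc'_nonneg s)]
    nlinarith [acc'_le_one s, abs_nonneg u]
  by_cases hs : s ∈ Icc (-|u|) |u|
  · rw [indicator_of_mem hs]
    simp only [Pi.one_apply, mul_one]
    nlinarith [sq_nonneg u]
  · rw [indicator_of_notMem hs, mul_zero, add_zero]
    rcases lt_or_ge s (-|u|) with h | h
    · have hu := abs_le.1 (le_refl |u|)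
      have hs0 : s < 0 := by linarith [abs_nonneg u]
      rw [acc_of_nonpos (by linarith), acc_of_nonpos hs0.le, acc', indicator_of_mem (by exact hs0)]
      have e1 : Real.exp (u + s) - Real.exp s - u * Real.exp s
          = Real.exp s * (Real.exp u - 1 - u) := by rw [Real.exp_add]; ring
      rw [e1, abs_mul, abs_of_pos (Real.exp_pos s)]
      rcases le_total |u| 1 with hu1 | hu1
      · calc Real.exp s * |Real.exp u - 1 - u| ≤ 1 * u ^ 2 := by
              gcongr
              · exact Real.exp_le_one_iff.2 hs0.le
              · exact Real.abs_exp_sub_one_sub_id_le hu1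
          _ = _ := one_mul _
      · rw [acc_of_nonpos (by linarith), acc_of_nonpos hs0.le, acc',
          indicator_of_mem (by exact hs0), e1, abs_mul, abs_of_pos (Real.exp_pos s)] at crude
        rcases le_total 2 |u| with hu2 | hu2
        · rw [← sq_abs u]; nlinarith
        -- here `1 ≤ |u| ≤ 2`, and the exponential factor `e^s ≤ e^{-|u|}` is small
        · have hes : Real.exp s ≤ Real.exp (-|u|) := Real.exp_le_exp.2 h.le
          have habs : |Real.exp u - 1 - u| ≤ Real.exp |u| := by
            have a1 := Real.add_one_le_exp u
            rw [abs_of_nonneg (by linarith)]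
            rcases le_total 0 u with h0 | h0
            · rw [abs_of_nonneg h0]; linarith
            · rw [abs_of_nonpos h0]
              have := Real.add_one_le_exp (-u)
              have := Real.exp_le_one_iff.2 h0
              linarith
          calc Real.exp s * |Real.exp u - 1 - u| ≤ Real.exp (-|u|) * Real.exp |u| := by gcongr
            _ = 1 := by rw [← Real.exp_add]; simp
            _ ≤ u ^ 2 := by rw [← sq_abs u]; nlinarith
    · have h2 : |u| < s := by
        by_contra hcon; exact hs ⟨h, not_lt.1 hcon⟩
      have hu := abs_le.1 (le_refl |u|)
      have h3 : 0 ≤ |u| := abs_nonneg u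
      rw [acc_of_nonneg (by linarith), acc_of_nonneg (by linarith), acc',
        indicator_of_notMem (by simp; linarith)]
      simp; positivity

/-- Tilting: for `S ~ N(-v/2, v)`, `E[e^S; S < 0] = P(S ≥ 0) = Φ(-√v/2)`. -/
lemma gauss_acc' {v : ℝ} (hv : 0 < v) :
    ∫ z, acc' (-v / 2 + √v * z) ∂stdG = stdCDF (-√v / 2) := by
  have hs : 0 < √v := Real.sqrt_pos.2 hv
  have hss : √v * √v = v := Real.mul_self_sqrt hv.le
  -- completing the square shifts the Gaussian density by `√v`
  have hpt : ∀ z : ℝ, gaussianPDFReal 0 1 z * acc' (-v / 2 + √v * z)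
      = (fun w => gaussianPDFReal 0 1 w * (Iio (-√v / 2)).indicator 1 w) (z - √v) := by
    intro z
    have hiff : -v / 2 + √v * z < 0 ↔ z - √v < -√v / 2 := by
      have : -v / 2 + √v * z = √v * (z - √v / 2) := by
        linear_combination (1 / 2) * hss
      rw [this, ← neg_pos, ← mul_neg, mul_pos_iff_of_pos_left hs]
      constructor <;> intro h <;> linarith
    simp only [acc', gaussianPDFReal_def]
    by_cases h : -v / 2 + √v * z < 0
    · rw [indicator_of_mem (by exact h), indicator_of_mem (by exact hiff.1 h), mul_assoc,
        ← Real.exp_add]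
      simp only [Pi.one_apply, mul_one, NNReal.coe_one, sub_zero]
      congr 2
      linear_combination (1 / 2) * hss
    · rw [indicator_of_notMem (by exact h), indicator_of_notMem (by exact fun h' => h (hiff.2 h'))]
      simp
  rw [integral_stdG, integral_congr_ae (ae_of_all _ hpt),
    integral_sub_right_eq_self (fun w => gaussianPDFReal 0 1 w * (Iio (-√v / 2)).indicator 1 w) _,
    ← integral_stdG, integral_indicator_one measurableSet_Iio, stdCDF]
  have : NullSingletonClass stdG := nullSingletonClass_gaussianReal one_ne_zero
  rw [measureReal_def, measure_congr Iio_ae_eq_Iic]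

lemma gauss_acc {v : ℝ} (hv : 0 < v) :
    ∫ z, acc (-v / 2 + √v * z) ∂stdG = 2 * stdCDF (-√v / 2) := by
  have hs : 0 < √v := Real.sqrt_pos.2 hv
  have hss : √v * √v = v := Real.mul_self_sqrt hv.le
  have hpt : ∀ z : ℝ, acc (-v / 2 + √v * z)
      = acc' (-v / 2 + √v * z) + (Ici (√v / 2)).indicator 1 z := by
    intro z
    have hiff : -v / 2 + √v * z < 0 ↔ z < √v / 2 := by
      have : -v / 2 + √v * z = √v * (z - √v / 2) := by
        linear_combination (1 / 2) * hss
      rw [this, ← neg_pos, ← mul_neg, mul_pos_iff_of_pos_left hs]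
      constructor <;> intro h <;> linarith
    by_cases h : -v / 2 + √v * z < 0
    · rw [acc_of_nonpos h.le, acc', indicator_of_mem (by exact h),
        indicator_of_notMem (by simpa using hiff.1 h), add_zero]
    · rw [acc_of_nonneg (not_lt.1 h), acc', indicator_of_notMem (by exact h),
        indicator_of_mem (by simpa using fun h' => h (hiff.2 h'))]
      simp
  have i1 : Integrable (fun z => acc' (-v / 2 + √v * z)) stdG :=
    Integrable.of_bound (measurable_acc'.comp (by fun_prop)).aestronglyMeasurable 1
      (ae_of_all _ fun z => by
        rw [Real.norm_eq_abs, abs_of_nonneg (acc'_nonneg _)]; exact acc'_le_one _)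
  have i2 : Integrable ((Ici (√v / 2)).indicator (1 : ℝ → ℝ)) stdG :=
    (integrable_const (1:ℝ)).indicator measurableSet_Ici
  rw [integral_congr_ae (ae_of_all _ hpt), integral_add i1 i2, gauss_acc' hv,
    integral_indicator_one measurableSet_Ici]
  have : stdG.real (Ici (√v / 2)) = stdCDF (-√v / 2) := by
    have hneg : stdG.map (fun x => -x) = stdG := by
      rw [stdG, gaussianReal_map_neg, neg_zero]
    rw [stdCDF, measureReal_def]
    conv_lhs => rw [← hneg, Measure.map_apply measurable_neg measurableSet_Ici]
    congr 2
    ext x; simp only [mem_preimage, mem_Ici, mem_Iic]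
    constructor <;> intro h <;> linarith
  rw [this]; ring

/-- `u ↦ E acc (u + S)`, `S ~ N(-v/2, v)`, has derivative `Φ(-√v/2)` at `0` with a quadratic
error. -/
lemma gauss_acc_taylor {v : ℝ} (hv : 0 < v) : ∃ C > 0, ∀ u : ℝ,
    |∫ z, (acc (u + (-v / 2 + √v * z)) - acc (-v / 2 + √v * z)) ∂stdG
      - u * stdCDF (-√v / 2)| ≤ C * u ^ 2 := by
  have hs : 0 < √v := Real.sqrt_pos.2 hv
  refine ⟨1 + 4 / √v, by positivity, fun u => ?_⟩
  have i1 : Integrable (fun z => acc' (-v / 2 + √v * z)) stdG :=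
    Integrable.of_bound (measurable_acc'.comp (by fun_prop)).aestronglyMeasurable 1
      (ae_of_all _ fun z => by
        rw [Real.norm_eq_abs, abs_of_nonneg (acc'_nonneg _)]; exact acc'_le_one _)
  have i2 : ∀ w : ℝ, Integrable (fun z => acc (w + (-v / 2 + √v * z))) stdG := fun w =>
    Integrable.of_bound (by fun_prop) 1 (ae_of_all _ fun z => abs_acc_le _)
  have i3 : Integrable (fun z => acc (-v / 2 + √v * z)) stdG := by simpa using i2 0
  set A : Set ℝ := (fun z => -v / 2 + √v * z) ⁻¹' Icc (-|u|) |u| with hA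
  have hAm : MeasurableSet A := measurableSet_Icc.preimage (by fun_prop)
  have i4 : Integrable (A.indicator (1 : ℝ → ℝ)) stdG :=
    (integrable_const (1:ℝ)).indicator hAm
  have hAI : A = Icc ((-|u| + v / 2) / √v) ((|u| + v / 2) / √v) := by
    ext z
    simp only [hA, mem_preimage, mem_Icc, div_le_iff₀ hs, le_div_iff₀ hs]
    constructor <;> rintro ⟨h1, h2⟩ <;> constructor <;> linarith
  have hAb : stdG.real A ≤ 2 * |u| / √v := by
    have hpdf : ∀ z, gaussianPDFReal 0 1 z ≤ 1 := fun z => by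
      rw [gaussianPDFReal_def]
      have h1 : (√(2 * Real.pi * ((1:NNReal):ℝ)))⁻¹ ≤ 1 := by
        apply inv_le_one_of_one_le₀
        rw [Real.one_le_sqrt]
        simp; linarith [Real.pi_gt_three]
      have h2 : Real.exp (-(z - 0) ^ 2 / (2 * ((1:NNReal):ℝ))) ≤ 1 := by
        rw [Real.exp_le_one_iff]
        rw [NNReal.coe_one, neg_div]
        exact neg_nonpos.2 (by positivity)
      exact mul_le_one₀ h1 (Real.exp_pos _).le h2
    have hvol : volume.real A = 2 * |u| / √v := by
      rw [hAI, Real.volume_real_Icc_of_le (by gcongr; linarith [abs_nonneg u])]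
      ring
    rw [measureReal_def, gaussianReal_apply_eq_integral 0 one_ne_zero, ENNReal.toReal_ofReal
      (setIntegral_nonneg hAm fun z _ => gaussianPDFReal_nonneg 0 1 z), ← hvol]
    have hfin : volume A ≠ ⊤ := by rw [hAI]; exact measure_Icc_lt_top.ne
    calc ∫ z in A, gaussianPDFReal 0 1 z ≤ ∫ z in A, (1:ℝ) :=
          setIntegral_mono_on (integrable_gaussianPDFReal 0 1).integrableOn
            (integrableOn_const hfin) hAm fun z _ => hpdf z
      _ = volume.real A := by simp
  have e1 : ∫ z, (acc (u + (-v / 2 + √v * z)) - acc (-v / 2 + √v * z)) ∂stdG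
      - u * stdCDF (-√v / 2)
      = ∫ z, (acc (u + (-v / 2 + √v * z)) - acc (-v / 2 + √v * z)
        - u * acc' (-v / 2 + √v * z)) ∂stdG := by
    rw [integral_sub (f := fun z => acc (u + (-v / 2 + √v * z)) - acc (-v / 2 + √v * z))
      ((i2 u).sub i3) (i1.const_mul u), integral_const_mul, gauss_acc' hv]
  rw [e1]
  have e2 : ∀ z, ‖acc (u + (-v / 2 + √v * z)) - acc (-v / 2 + √v * z)
        - u * acc' (-v / 2 + √v * z)‖ ≤ u ^ 2 + 2 * |u| * A.indicator 1 z := fun z => acc_taylor _ _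
  have i6 : Integrable (fun z => u ^ 2 + 2 * |u| * A.indicator (1 : ℝ → ℝ) z) stdG :=
    (integrable_const _).add (i4.const_mul _)
  refine (norm_integral_le_of_norm_le i6 (ae_of_all _ e2)).trans ?_
  rw [integral_add (integrable_const _) (i4.const_mul _), integral_const_mul,
    integral_indicator_one hAm, integral_const]
  simp only [probReal_univ, smul_eq_mul, one_mul]
  have : 2 * |u| * stdG.real A ≤ 2 * |u| * (2 * |u| / √v) := by gcongr
  have e3 : 2 * |u| * (2 * |u| / √v) = 4 / √v * u ^ 2 := by rw [← sq_abs u]; ring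
  linarith

/-! ### Taylor estimates with exponential weights -/

/-- A function vanishing at `0` with derivative bounded by `B` on `[-|t|, |t|]` is at most
`B |t|` at `t`. -/
lemma step_bound {H H' : ℝ → ℝ} {B t : ℝ} (h0 : H 0 = 0) (hH : ∀ y, HasDerivAt H (H' y) y)
    (hB : ∀ y, |y| ≤ |t| → |H' y| ≤ B) : |H t| ≤ B * |t| := by
  have hc : Convex ℝ (Icc (-|t|) |t|) := convex_Icc _ _
  have := hc.norm_image_sub_le_of_norm_hasDerivWithin_le (f := H) (f' := H') (C := B)
    (x := 0) (y := t) (fun y _ => (hH y).hasDerivWithinAt) (fun y hy => hB y (abs_le.2 hy))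
    (mem_Icc.2 ⟨by simp, by simp⟩) (mem_Icc.2 ⟨neg_abs_le t, le_abs_self t⟩)
  simpa [h0] using this

/-- `f, f1, f2, f3` are successive derivatives, and the derivatives of order one to three grow
at most like `A e^{c|y|}`. -/
structure Tame (f f1 f2 f3 : ℝ → ℝ) (A c : ℝ) : Prop where
  h1 : ∀ y, HasDerivAt f (f1 y) y
  h2 : ∀ y, HasDerivAt f1 (f2 y) y
  h3 : ∀ y, HasDerivAt f2 (f3 y) y
  b1 : ∀ y, |f1 y| ≤ A * Real.exp (c * |y|)
  b2 : ∀ y, |f2 y| ≤ A * Real.exp (c * |y|)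
  b3 : ∀ y, |f3 y| ≤ A * Real.exp (c * |y|)

/-- Finite-order Taylor estimates of a `Tame` function, with a common exponential weight. -/
lemma Tame.taylor {f f1 f2 f3 : ℝ → ℝ} {A c : ℝ} (h : Tame f f1 f2 f3 A c) (hc : 0 ≤ c)
    (hA : 0 ≤ A) (x t : ℝ) :
    |f1 (x + t)| ≤ A * Real.exp (c * |x|) * Real.exp (c * |t|) ∧
    |f (x + t) - f x| ≤ A * Real.exp (c * |x|) * (|t| * Real.exp (c * |t|)) ∧
    |f1 (x + t) - f1 x| ≤ A * Real.exp (c * |x|) * (|t| * Real.exp (c * |t|)) ∧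
    |f (x + t) - f x - f1 x * t| ≤ A * Real.exp (c * |x|) * (|t| ^ 2 * Real.exp (c * |t|)) ∧
    |f (x + t) - f x - f1 x * t - f2 x / 2 * t ^ 2|
      ≤ A * Real.exp (c * |x|) * (|t| ^ 3 * Real.exp (c * |t|)) := by
  set W := A * Real.exp (c * |x|) with hW
  have hW0 : 0 ≤ W := by positivity
  have hE : ∀ y, |y| ≤ |t| → A * Real.exp (c * |x + y|) ≤ W * Real.exp (c * |t|) := by
    intro y hy
    rw [hW, mul_assoc, ← Real.exp_add]
    gcongr
    have := abs_add_le x y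
    nlinarith
  have sh : ∀ {g g' : ℝ → ℝ}, (∀ y, HasDerivAt g (g' y) y) → ∀ y,
      HasDerivAt (fun y => g (x + y)) (g' (x + y)) y := fun hg y =>
    (hg (x + y)).comp_const_add x y
  -- each order of the expansion follows from the previous one for the derivative
  have o1 : ∀ {g g' : ℝ → ℝ}, (∀ y, HasDerivAt g (g' y) y) →
      (∀ y, |g' y| ≤ A * Real.exp (c * |y|)) → ∀ s, |s| ≤ |t| →
      |g (x + s) - g x| ≤ W * Real.exp (c * |t|) * |s| := by
    intro g g' hg hb s hs
    exact step_bound (H := fun y => g (x + y) - g x) (H' := fun y => g' (x + y)) (by simp)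
      (fun y => (sh hg y).sub_const _) (fun y hy => (hb _).trans (hE y (hy.trans hs)))
  have o2 : ∀ {g g' g'' : ℝ → ℝ}, (∀ y, HasDerivAt g (g' y) y) → (∀ y, HasDerivAt g' (g'' y) y) →
      (∀ y, |g'' y| ≤ A * Real.exp (c * |y|)) → ∀ s, |s| ≤ |t| →
      |g (x + s) - g x - g' x * s| ≤ W * Real.exp (c * |t|) * |s| * |s| := by
    intro g g' g'' hg hg' hb s hs
    refine step_bound (H := fun y => g (x + y) - g x - g' x * y)
      (H' := fun y => g' (x + y) - g' x) (by simp)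
      (fun y => ?_) (fun y hy => (o1 hg' hb y (hy.trans hs)).trans ?_)
    · simpa using ((sh hg y).sub_const (g x)).fun_sub ((hasDerivAt_id' y).const_mul (g' x))
    · gcongr
  have o3 : ∀ s, |s| ≤ |t| →
      |f (x + s) - f x - f1 x * s - f2 x / 2 * s ^ 2| ≤ W * Real.exp (c * |t|) * |s| * |s| * |s| := by
    intro s hs
    refine step_bound (H := fun y => f (x + y) - f x - f1 x * y - f2 x / 2 * y ^ 2)
      (H' := fun y => f1 (x + y) - f1 x - f2 x * y) (by simp)
      (fun y => ?_) (fun y hy => (o2 h.h2 h.h3 h.b3 y (hy.trans hs)).trans ?_)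
    · have := (((sh h.h1 y).sub_const (f x)).fun_sub ((hasDerivAt_id' y).const_mul (f1 x))).fun_sub
        ((hasDerivAt_pow 2 y).const_mul (f2 x / 2))
      refine this.congr_deriv ?_
      push_cast; ring
    · gcongr
  refine ⟨(h.b1 _).trans (hE t le_rfl), ?_, ?_, ?_, ?_⟩
  · exact (o1 h.h1 h.b1 t le_rfl).trans_eq (by ring)
  · exact (o1 h.h2 h.b2 t le_rfl).trans_eq (by ring)
  · exact (o2 h.h1 h.h2 h.b2 t le_rfl).trans_eq (by ring)
  · exact (o3 t le_rfl).trans_eq (by ring)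

/-- Scaling of the Taylor weights: for `t = σ z` with `σ ≤ l` and `c ≤ 1`. -/
lemma weight_le {σ l c : ℝ} (hσ : 0 ≤ σ) (hσl : σ ≤ l) (hc1 : c ≤ 1) (k : ℕ)
    (z : ℝ) : |σ * z| ^ k * Real.exp (c * |σ * z|)
      ≤ (k.factorial : ℝ) * σ ^ k * Real.exp ((l + 1) * |z|) := by
  have h1 : |z| ^ k ≤ k.factorial * Real.exp |z| := by
    have := Real.pow_div_factorial_le_exp |z| (abs_nonneg z) k
    rwa [div_le_iff₀ (by positivity), mul_comm] at this
  have h2 : Real.exp (c * |σ * z|) ≤ Real.exp (l * |z|) := by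
    apply Real.exp_le_exp.2
    rw [abs_mul, abs_of_nonneg hσ]
    have : σ * |z| ≤ l * |z| := by gcongr
    have : 0 ≤ σ * |z| := by positivity
    nlinarith
  rw [abs_mul, abs_of_nonneg hσ, mul_pow]
  rw [abs_mul, abs_of_nonneg hσ] at h2
  calc _ ≤ σ ^ k * (k.factorial * Real.exp |z|) * Real.exp (l * |z|) := by gcongr
    _ = k.factorial * σ ^ k * (Real.exp |z| * Real.exp (l * |z|)) := by ring
    _ = _ := by rw [← Real.exp_add]; congr 2; ring

/-- Taylor estimates at scale `σ` in a form uniform in the weight. -/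
lemma Tame.scaled {f f1 f2 f3 : ℝ → ℝ} {A c σ l : ℝ} (h : Tame f f1 f2 f3 A c) (hc : 0 ≤ c)
    (hc1 : c ≤ 1) (hA : 0 ≤ A) (hσ : 0 ≤ σ) (hσl : σ ≤ l) (x z : ℝ) :
    |f1 (x + σ * z)| ≤ 6 * A * Real.exp (c * |x|) * Real.exp ((l + 1) * |z|) ∧
    |f (x + σ * z) - f x| ≤ 6 * A * Real.exp (c * |x|) * σ * Real.exp ((l + 1) * |z|) ∧
    |f1 (x + σ * z) - f1 x| ≤ 6 * A * Real.exp (c * |x|) * σ * Real.exp ((l + 1) * |z|) ∧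
    |f (x + σ * z) - f x - f1 x * (σ * z)|
      ≤ 6 * A * Real.exp (c * |x|) * σ ^ 2 * Real.exp ((l + 1) * |z|) ∧
    |f (x + σ * z) - f x - f1 x * (σ * z) - f2 x / 2 * (σ * z) ^ 2|
      ≤ 6 * A * Real.exp (c * |x|) * σ ^ 3 * Real.exp ((l + 1) * |z|) := by
  obtain ⟨t0, t1, t2, t3, t4⟩ := h.taylor hc hA x (σ * z)
  have hW0 : 0 ≤ A * Real.exp (c * |x|) := by positivity
  have key : ∀ k : ℕ, k ≤ 3 → A * Real.exp (c * |x|) * (|σ * z| ^ k * Real.exp (c * |σ * z|))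
      ≤ 6 * A * Real.exp (c * |x|) * σ ^ k * Real.exp ((l + 1) * |z|) := by
    intro k hk
    have hk6 : (k.factorial : ℝ) ≤ 6 := by
      have : k.factorial ≤ Nat.factorial 3 := Nat.factorial_le hk
      exact_mod_cast this
    calc _ ≤ A * Real.exp (c * |x|) * ((k.factorial : ℝ) * σ ^ k * Real.exp ((l + 1) * |z|)) := by
          exact mul_le_mul_of_nonneg_left (weight_le hσ hσl hc1 k z) hW0
      _ ≤ A * Real.exp (c * |x|) * (6 * σ ^ k * Real.exp ((l + 1) * |z|)) := by gcongr
      _ = _ := by ring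
  have k0 := key 0 (by norm_num)
  have k1 := key 1 (by norm_num)
  have k2 := key 2 (by norm_num)
  have k3 := key 3 (by norm_num)
  simp only [pow_zero, pow_one, one_mul, mul_one] at k0 k1
  exact ⟨t0.trans k0, t1.trans k1, t2.trans k1, t3.trans k2, t4.trans k3⟩

lemma MemS.bound {n : ℕ} {g : ℝ → ℝ} (h : MemS n g) {i : ℕ} (hi : i ≤ n) {s : ℝ} (hs : 0 < s)
    (y : ℝ) : |iteratedDeriv i g y| ≤ normIS (iteratedDeriv i g) s * Real.exp (s * |y|) := by
  have := le_ciSup (h.2 s hs i hi) y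
  rw [Real.exp_neg, inv_mul_le_iff₀ (Real.exp_pos _)] at this
  rw [mul_comm]; exact this

lemma normIS_nonneg (g : ℝ → ℝ) (s : ℝ) : 0 ≤ normIS g s :=
  Real.iSup_nonneg fun _ => by positivity

lemma MemS.tame {n : ℕ} (hn : 3 ≤ n) {g : ℝ → ℝ} (h : MemS n g) {s : ℝ} (hs : 0 < s) :
    Tame g (deriv g) (deriv (deriv g)) (iteratedDeriv 3 g)
      (∑ i ∈ Finset.Icc 1 3, normIS (iteratedDeriv i g) s) s := by
  have hcd : ContDiff ℝ 3 g := h.1.of_le (by exact_mod_cast hn)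
  have e2 : deriv (deriv g) = iteratedDeriv 2 g := by
    rw [iteratedDeriv_succ, iteratedDeriv_one]
  have hd : ∀ m : ℕ, m < 3 → ∀ y, HasDerivAt (iteratedDeriv m g) (iteratedDeriv (m + 1) g y) y := by
    intro m hm y
    rw [iteratedDeriv_succ]
    exact (hcd.differentiable_iteratedDeriv m (by exact_mod_cast hm) y).hasDerivAt
  have hb : ∀ i ∈ Finset.Icc 1 3, ∀ y, |iteratedDeriv i g y|
      ≤ (∑ i ∈ Finset.Icc 1 3, normIS (iteratedDeriv i g) s) * Real.exp (s * |y|) := by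
    intro i hi y
    refine (h.bound ((Finset.mem_Icc.1 hi).2.trans hn) hs y).trans ?_
    gcongr
    exact Finset.single_le_sum (f := fun i => normIS (iteratedDeriv i g) s)
      (fun i _ => normIS_nonneg _ _) hi
  refine ⟨fun y => ?_, fun y => ?_, fun y => ?_, fun y => ?_, fun y => ?_, hb 3 (by simp)⟩
  · simpa [iteratedDeriv_one] using hd 0 (by norm_num) y
  · simpa only [iteratedDeriv_one, e2] using hd 1 (by norm_num) y
  · rw [e2]; exact hd 2 (by norm_num) y
  · simpa only [iteratedDeriv_one] using hb 1 (by simp) y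
  · rw [e2]; exact hb 2 (by simp) y

/-! ### The target density -/

lemma integrable_exp_neg_abs : Integrable fun x : ℝ => Real.exp (-|x|) := by
  refine Integrable.mono' (integrable_inv_one_add_sq.const_mul 3) (by fun_prop)
    (ae_of_all _ fun x => ?_)
  rw [Real.norm_eq_abs, abs_of_pos (Real.exp_pos _), Real.exp_neg, ← div_eq_mul_inv,
    inv_le_comm₀ (Real.exp_pos _) (by positivity), inv_div, div_le_iff₀ (by norm_num)]
  have h1 := Real.quadratic_le_exp_of_nonneg (abs_nonneg x)
  have h2 : |x| ^ 2 = x ^ 2 := sq_abs x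
  nlinarith [abs_nonneg x]

lemma bdd_right {L : ℝ → ℝ} (hL : Differentiable ℝ L) (ht : Tendsto (deriv L) atTop atBot)
    (s : ℝ) : ∃ C, ∀ x, 0 ≤ x → L x + s * x ≤ C := by
  obtain ⟨X, hX⟩ := eventually_atTop.1 (ht.eventually (eventually_le_atBot (-s)))
  set Y := max X 0
  have hd : Differentiable ℝ fun x => L x + s * x := by fun_prop
  obtain ⟨C, hC⟩ := (isCompact_Icc (a := (0:ℝ)) (b := Y)).bddAbove_image hd.continuous.continuousOn
  have hanti : AntitoneOn (fun x => L x + s * x) (Ici Y) := by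
    refine antitoneOn_of_deriv_nonpos (convex_Ici Y) hd.continuous.continuousOn
      hd.differentiableOn fun x hx => ?_
    rw [interior_Ici] at hx
    have : deriv (fun x => L x + s * x) x = deriv L x + s := by
      simpa using ((hL x).hasDerivAt.fun_add ((hasDerivAt_id' x).const_mul s)).deriv
    rw [this]
    linarith [hX x ((le_max_left X 0).trans (le_of_lt hx))]
  refine ⟨C, fun x hx => ?_⟩
  rcases le_total x Y with h | h
  · exact hC ⟨x, ⟨hx, h⟩, rfl⟩
  · exact (hanti self_mem_Ici h h).trans (hC ⟨Y, ⟨le_max_right _ _, le_rfl⟩, rfl⟩)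

/-- The standing assumptions on the target density. -/
structure Target (ρ : ℝ → ℝ) : Prop where
  meas : Measurable ρ
  pos : ∀ x, 0 < ρ x
  one : ∫ x, ρ x = 1
  log : MemS 4 fun x => Real.log (ρ x)
  tail : SuperExpTails ρ

/-- The one-dimensional target law. -/
def mu (ρ : ℝ → ℝ) : Measure ℝ := volume.withDensity fun x => ENNReal.ofReal (ρ x)

namespace Target

variable {ρ : ℝ → ℝ}

lemma diff (h : Target ρ) : Differentiable ℝ fun x => Real.log (ρ x) :=
  h.log.1.differentiable (by norm_num)

/-- Super-exponential tails beat every exponential. -/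
lemma rho_le (h : Target ρ) (s : ℝ) : ∃ C > 0, ∀ x, ρ x ≤ C * Real.exp (-(s * |x|)) := by
  obtain ⟨C1, h1⟩ := bdd_right h.diff h.tail.1 s
  obtain ⟨C2, h2⟩ := bdd_right (L := fun x => Real.log (ρ (-x))) (h.diff.comp differentiable_neg)
    (by
      have : deriv (fun x => Real.log (ρ (-x))) = fun x => -dl ρ (-x) := by
        funext x; exact deriv_comp_neg (fun x => Real.log (ρ x)) x
      rw [this]
      exact tendsto_neg_atTop_atBot.comp (h.tail.2.comp tendsto_neg_atTop_atBot)) s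
  refine ⟨Real.exp (max C1 C2), Real.exp_pos _, fun x => ?_⟩
  rw [← Real.exp_log (h.pos x), ← Real.exp_add, Real.exp_le_exp]
  rcases le_total 0 x with hx | hx
  · rw [abs_of_nonneg hx]; linarith [h1 x hx, le_max_left C1 C2]
  · rw [abs_of_nonpos hx]
    have := h2 (-x) (by linarith)
    rw [neg_neg] at this
    linarith [le_max_right C1 C2]

lemma int_exp (h : Target ρ) (s : ℝ) : Integrable fun x => Real.exp (s * |x|) * ρ x := by
  obtain ⟨C, hC, hb⟩ := h.rho_le (s + 1)
  refine Integrable.mono' (integrable_exp_neg_abs.const_mul C)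
    ((Measurable.mul (by fun_prop) h.meas).aestronglyMeasurable) (ae_of_all _ fun x => ?_)
  have := h.pos x
  rw [Real.norm_eq_abs, abs_of_pos (by positivity)]
  calc _ ≤ Real.exp (s * |x|) * (C * Real.exp (-((s + 1) * |x|))) := by gcongr; exact hb x
    _ = C * (Real.exp (s * |x|) * Real.exp (-((s + 1) * |x|))) := by ring
    _ = _ := by rw [← Real.exp_add]; congr 2; ring

lemma integrable_mu (h : Target ρ) {g : ℝ → ℝ} :
    Integrable g (mu ρ) ↔ Integrable fun x => g x * ρ x := by
  rw [mu, integrable_withDensity_iff (by have := h.meas; fun_prop) (ae_of_all _ fun x => by simp)]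
  simp only [ENNReal.toReal_ofReal (h.pos _).le]

lemma integral_mu (h : Target ρ) (g : ℝ → ℝ) : ∫ x, g x ∂(mu ρ) = rhoE ρ g := by
  rw [mu, rhoE, integral_withDensity_eq_integral_toReal_smul (by have := h.meas; fun_prop)
    (ae_of_all _ fun x => by simp)]
  simp only [ENNReal.toReal_ofReal (h.pos _).le, smul_eq_mul, mul_comm]

lemma prob (h : Target ρ) : IsProbabilityMeasure (mu ρ) := by
  constructor
  rw [mu, withDensity_apply _ MeasurableSet.univ, Measure.restrict_univ,
    ← ofReal_integral_eq_lintegral_ofReal _ (ae_of_all _ fun x => (h.pos x).le), h.one,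
    ENNReal.ofReal_one]
  simpa using h.int_exp 0

lemma integrable_of_bound (h : Target ρ) {g : ℝ → ℝ} {C s : ℝ} (hg : Measurable g)
    (hb : ∀ x, |g x| ≤ C * Real.exp (s * |x|)) : Integrable g (mu ρ) :=
  Integrable.mono' ((h.integrable_mu.2 (h.int_exp s)).const_mul C) hg.aestronglyMeasurable
    (ae_of_all _ hb)

lemma cont_dl (h : Target ρ) : Continuous (dl ρ) :=
  h.log.1.continuous_deriv (by norm_num)

lemma tame (h : Target ρ) : ∃ A > 0, Tame (fun x => Real.log (ρ x)) (dl ρ) (d2l ρ)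
    (iteratedDeriv 3 fun x => Real.log (ρ x)) A (1 / 4) := by
  have t := h.log.tame (by norm_num) (s := 1 / 4) (by norm_num)
  set A := ∑ i ∈ Finset.Icc 1 3, normIS (iteratedDeriv i fun x => Real.log (ρ x)) (1 / 4)
  have hA : A ≤ |A| + 1 := by linarith [le_abs_self A]
  exact ⟨|A| + 1, by positivity, t.h1, t.h2, t.h3, fun y => (t.b1 y).trans (by gcongr),
    fun y => (t.b2 y).trans (by gcongr), fun y => (t.b3 y).trans (by gcongr)⟩

lemma cont_d2l (h : Target ρ) : Continuous (d2l ρ) := by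
  obtain ⟨A, _, t⟩ := h.tame
  exact continuous_iff_continuousAt.2 fun y => (t.h3 y).continuousAt

lemma bound_sq (h : Target ρ) : ∃ C > 0, ∀ x, |dl ρ x ^ 2| ≤ C * Real.exp (1 / 2 * |x|) := by
  obtain ⟨A, hA, t⟩ := h.tame
  refine ⟨A ^ 2, by positivity, fun x => ?_⟩
  rw [abs_pow]
  calc |dl ρ x| ^ 2 ≤ (A * Real.exp (1 / 4 * |x|)) ^ 2 := by gcongr; exact t.b1 x
    _ = A ^ 2 * (Real.exp (1 / 4 * |x|) * Real.exp (1 / 4 * |x|)) := by ring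
    _ = _ := by rw [← Real.exp_add]; congr 2; ring

lemma int_sq (h : Target ρ) : Integrable fun x => dl ρ x ^ 2 * ρ x := by
  obtain ⟨C, _, hb⟩ := h.bound_sq
  exact h.integrable_mu.1 (h.integrable_of_bound (h.cont_dl.pow 2).measurable hb)

lemma hasDerivAt (h : Target ρ) (x : ℝ) : HasDerivAt ρ (dl ρ x * ρ x) x := by
  obtain ⟨A, _, t⟩ := h.tame
  have := (t.h1 x).exp
  simp only [Real.exp_log (h.pos _)] at this
  rwa [mul_comm] at this

/-- The integration by parts identity `ρ((log ρ)'') = -J`. -/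
lemma integral_d2l (h : Target ρ) : ∫ x, d2l ρ x ∂(mu ρ) = -Jc ρ := by
  obtain ⟨A, _, t⟩ := h.tame
  have i1 : Integrable fun x => dl ρ x * ρ x :=
    h.integrable_mu.1 (h.integrable_of_bound h.cont_dl.measurable t.b1)
  have i2 : Integrable fun x => d2l ρ x * ρ x :=
    h.integrable_mu.1 (h.integrable_of_bound h.cont_d2l.measurable t.b2)
  have hd : ∀ x, HasDerivAt (fun x => dl ρ x * ρ x) (d2l ρ x * ρ x + dl ρ x ^ 2 * ρ x) x := by
    intro x
    refine ((t.h2 x).fun_mul (h.hasDerivAt x)).congr_deriv (by ring)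
  have := integral_eq_zero_of_hasDerivAt_of_integrable hd (i2.add h.int_sq) i1
  rw [integral_add i2 h.int_sq] at this
  rw [h.integral_mu, rhoE, Jc, rhoE]
  linarith

lemma J_pos (h : Target ρ) : 0 < Jc ρ := by
  rw [Jc, rhoE]
  obtain ⟨x, hx⟩ := (h.tail.1.eventually (eventually_le_atBot (-1))).exists
  refine integral_pos_of_integrable_nonneg_nonzero (x := x) ?_ h.int_sq
    (fun y => mul_nonneg (sq_nonneg _) (h.pos y).le) ?_
  · have h1 := h.cont_dl
    have h2 : Continuous ρ := continuous_iff_continuousAt.2 fun y => (h.hasDerivAt y).continuousAt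
    fun_prop
  · have := h.pos x
    have h3 : dl ρ x ≠ 0 := by intro h0; rw [h0] at hx; norm_num at hx
    positivity

end Target

/-! ### Concentration at the sluggish scale -/

lemma Sluggish.lower {a : ℕ → ℝ} (ha : Sluggish a) : ∃ m > 0, ∀ d, m ≤ a d := by
  obtain ⟨N, hN⟩ := eventually_atTop.1 (ha.2.1.eventually_ge_atTop 1)
  obtain ⟨i, _, hi⟩ := (Finset.range (N + 1)).exists_min_image a ⟨0, by simp⟩
  refine ⟨min 1 (a i), lt_min one_pos (ha.1 i), fun d => ?_⟩
  rcases le_total N d with h | h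
  · exact (min_le_left _ _).trans (hN d h)
  · exact (min_le_right _ _).trans (hi d (Finset.mem_range.2 (by omega)))

/-- Two forms of `a_d² = O(log d)`: against `log d` itself and against `√d`. -/
lemma Sluggish.upper {a : ℕ → ℝ} (ha : Sluggish a) :
    ∃ M > 0, ∀ d : ℕ, 2 ≤ d → a d ^ 2 ≤ M ^ 2 * Real.log d ∧ a d ^ 2 ≤ 2 * M ^ 2 * √(d:ℝ) := by
  obtain ⟨M, hM⟩ := ha.2.2
  refine ⟨|M| + 1, by positivity, fun d hd => ?_⟩
  have hd1 : (1:ℝ) < d := by exact_mod_cast hd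
  have hlog : 0 < Real.log d := Real.log_pos hd1
  have h1 := hM d hd
  rw [div_le_iff₀ (Real.sqrt_pos.2 hlog)] at h1
  have h2 : a d ≤ (|M| + 1) * √(Real.log d) :=
    h1.trans (by gcongr; linarith [le_abs_self M])
  have h3 : a d ^ 2 ≤ (|M| + 1) ^ 2 * Real.log d := by
    calc a d ^ 2 ≤ ((|M| + 1) * √(Real.log d)) ^ 2 := by
          have := (ha.1 d).le
          gcongr
      _ = _ := by rw [mul_pow, Real.sq_sqrt hlog.le]
  refine ⟨h3, h3.trans ?_⟩
  have h4 : Real.log d ≤ 2 * √(d:ℝ) := by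
    have h5 := Real.log_le_sub_one_of_pos (x := √(d:ℝ)) (by positivity)
    rw [Real.log_sqrt (by positivity)] at h5
    linarith
  calc _ ≤ (|M| + 1) ^ 2 * (2 * √(d:ℝ)) := by gcongr
    _ = _ := by ring

lemma exp_le_quad {u B : ℝ} (h : |u| ≤ B) : Real.exp u ≤ 1 + u + u ^ 2 * Real.exp B := by
  have h1 : |Real.exp u - 1 - u| ≤ u ^ 2 * Real.exp |u| := by
    have := Complex.norm_exp_sub_sum_le_norm_mul_exp (u : ℂ) 2
    have e : Complex.exp (u : ℂ) - ∑ m ∈ Finset.range 2, (u : ℂ) ^ m / (m.factorial : ℂ)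
        = ((Real.exp u - 1 - u : ℝ) : ℂ) := by
      simp [Finset.sum_range_succ, sub_sub]
    rw [e, Complex.norm_real, Complex.norm_real, Real.norm_eq_abs, Real.norm_eq_abs, sq_abs] at this
    exact this
  have h2 : u ^ 2 * Real.exp |u| ≤ u ^ 2 * Real.exp B := by gcongr
  linarith [le_abs_self (Real.exp u - 1 - u)]

/-- Chernoff bound for a sum over a subset of the coordinates of a product measure. -/
lemma chernoff_pi {μ : Measure ℝ} [IsProbabilityMeasure μ] {d : ℕ} (s : Finset (Fin d))
    {g : ℝ → ℝ} {T t κ ε : ℝ} (hg : Measurable g) (hT : ∀ x, |g x| ≤ T) (ht : 0 ≤ t) (hκ : 0 ≤ κ)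
    (hm : ∫ x, Real.exp (t * g x) ∂μ ≤ Real.exp κ) :
    (Measure.pi fun _ : Fin d => μ).real {x | ε ≤ ∑ i ∈ s, g (x i)}
      ≤ Real.exp (-t * ε + d * κ) := by
  have hmeas : Measurable fun x : Fin d → ℝ => ∑ i ∈ s, g (x i) := by fun_prop
  have hT0 : 0 ≤ T := (abs_nonneg _).trans (hT 0)
  have hint : Integrable (fun x : Fin d → ℝ => Real.exp (t * ∑ i ∈ s, g (x i)))
      (Measure.pi fun _ : Fin d => μ) := by
    refine Integrable.of_bound (by exact (Real.measurable_exp.comp (hmeas.const_mul t)).aestronglyMeasurable) (Real.exp (t * (s.card * T))) (ae_of_all _ fun x => ?_)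
    rw [Real.norm_eq_abs, abs_of_pos (Real.exp_pos _), Real.exp_le_exp]
    gcongr
    rw [← nsmul_eq_mul]
    exact Finset.sum_le_card_nsmul _ _ _ fun i _ => (le_abs_self _).trans (hT _)
  refine (measure_ge_le_exp_mul_mgf ε ht hint).trans ?_
  rw [Real.exp_add]
  gcongr
  have e1 : ∀ x : Fin d → ℝ, Real.exp (t * ∑ i ∈ s, g (x i))
      = ∏ i, (fun (i : Fin d) y => if i ∈ s then Real.exp (t * g y) else 1) i (x i) := by
    intro x
    rw [Finset.mul_sum, Real.exp_sum, ← Finset.prod_filter]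
    simp
  rw [mgf, integral_congr_ae (ae_of_all _ e1),
    integral_fintype_prod_eq_prod
      (fun (i : Fin d) y => if i ∈ s then Real.exp (t * g y) else 1)]
  calc _ ≤ ∏ _i : Fin d, Real.exp κ := by
        refine Finset.prod_le_prod (fun i _ => integral_nonneg fun y => ?_) fun i _ => ?_
        · by_cases hi : i ∈ s <;> simp [hi]; positivity
        · by_cases hi : i ∈ s
          · simpa [hi] using hm
          · simpa [hi] using hκ
    _ = _ := by rw [Finset.prod_const, ← Real.exp_nat_mul]; simp

/-- Markov's inequality for a high moment. -/
lemma tail_le {μ : Measure ℝ} [IsProbabilityMeasure μ] {g : ℝ → ℝ}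
    (hi : ∀ n : ℕ, Integrable (fun x => |g x| ^ n) μ) {T : ℝ} (hT : 0 < T) (p : ℕ) :
    μ.real {x | T < |g x|} ≤ (∫ x, |g x| ^ p ∂μ) / T ^ p := by
  rw [le_div_iff₀ (by positivity), mul_comm]
  refine le_trans ?_ (mul_meas_ge_le_integral_of_nonneg (ae_of_all _ fun x => by positivity)
    (hi p) (T ^ p))
  refine mul_le_mul_of_nonneg_left (measureReal_mono (fun x hx => ?_) (measure_ne_top _ _))
    (by positivity)
  exact pow_le_pow_left₀ hT.le (le_of_lt hx) p

/-- Moment generating function of a centred variable truncated at level `T`. -/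
lemma mgf_trunc {μ : Measure ℝ} [IsProbabilityMeasure μ] {g : ℝ → ℝ} (hg : Measurable g)
    (hi : ∀ n : ℕ, Integrable (fun x => |g x| ^ n) μ) (h0 : ∫ x, g x ∂μ = 0)
    {T t B : ℝ} (hT : 0 < T) (ht : 0 ≤ t) (hB : t * T ≤ B) :
    ∫ x, Real.exp (t * {x | |g x| ≤ T}.indicator g x) ∂μ
      ≤ 1 + t * ((∫ x, |g x| ^ 3 ∂μ) / T ^ 2) + t ^ 2 * (Real.exp B * ∫ x, |g x| ^ 2 ∂μ) := by
  set gT := {x | |g x| ≤ T}.indicator g with hgT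
  have hmT : Measurable gT := hg.indicator (measurableSet_le (by fun_prop) measurable_const)
  have b1 : ∀ x, |gT x| ≤ T := fun x => by
    by_cases h : |g x| ≤ T
    · rw [hgT, indicator_of_mem (by exact h)]; exact h
    · rw [hgT, indicator_of_notMem (by exact h), abs_zero]; exact hT.le
  have b2 : ∀ x, |gT x| ≤ |g x| := fun x => by
    by_cases h : |g x| ≤ T
    · rw [hgT, indicator_of_mem (by exact h)]
    · rw [hgT, indicator_of_notMem (by exact h), abs_zero]; exact abs_nonneg _
  have b3 : ∀ x, |gT x - g x| ≤ |g x| ^ 3 / T ^ 2 := fun x => by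
    by_cases h : |g x| ≤ T
    · rw [hgT, indicator_of_mem (by exact h), sub_self, abs_zero]; positivity
    · rw [hgT, indicator_of_notMem (by exact h), zero_sub, abs_neg, le_div_iff₀ (by positivity)]
      have : T ^ 2 ≤ |g x| ^ 2 := by have := (not_le.1 h).le; gcongr
      calc |g x| * T ^ 2 ≤ |g x| * |g x| ^ 2 := by gcongr
        _ = _ := by ring
  have ig : Integrable g μ := by
    have := hi 1
    simp only [pow_one] at this
    exact (integrable_norm_iff hg.aestronglyMeasurable).1 this
  have igT : Integrable gT μ := ig.mono hmT.aestronglyMeasurable (ae_of_all _ b2)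
  have iexp : Integrable (fun x => Real.exp (t * gT x)) μ := by
    refine Integrable.of_bound (by fun_prop) (Real.exp (t * T)) (ae_of_all _ fun x => ?_)
    rw [Real.norm_eq_abs, abs_of_pos (Real.exp_pos _), Real.exp_le_exp]
    gcongr
    exact (le_abs_self _).trans (b1 x)
  have iR : Integrable (fun x => 1 + t * gT x + t ^ 2 * Real.exp B * |g x| ^ 2) μ :=
    ((integrable_const _).add (igT.const_mul t)).add ((hi 2).const_mul _)
  have step1 : ∫ x, Real.exp (t * gT x) ∂μ
      ≤ ∫ x, (1 + t * gT x + t ^ 2 * Real.exp B * |g x| ^ 2) ∂μ := by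
    refine integral_mono iexp iR fun x => ?_
    have hu : |t * gT x| ≤ B := by
      rw [abs_mul, abs_of_nonneg ht]
      exact (mul_le_mul_of_nonneg_left (b1 x) ht).trans hB
    refine (exp_le_quad hu).trans ?_
    have : (t * gT x) ^ 2 * Real.exp B ≤ t ^ 2 * Real.exp B * |g x| ^ 2 := by
      rw [mul_pow, ← sq_abs (gT x)]
      calc _ = t ^ 2 * Real.exp B * |gT x| ^ 2 := by ring
        _ ≤ _ := mul_le_mul_of_nonneg_left (pow_le_pow_left₀ (abs_nonneg _) (b2 x) 2)
            (by positivity)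
    linarith
  have step2 : ∫ x, gT x ∂μ ≤ (∫ x, |g x| ^ 3 ∂μ) / T ^ 2 := by
    have e : ∫ x, gT x ∂μ = ∫ x, (gT x - g x) ∂μ := by rw [integral_sub igT ig, h0, sub_zero]
    rw [e, ← integral_div]
    exact integral_mono (igT.sub ig) ((hi 3).div_const _)
      fun x => (le_abs_self _).trans (b3 x)
  have i12 : Integrable (fun x => 1 + t * gT x) μ := (integrable_const _).add (igT.const_mul t)
  rw [integral_add i12 ((hi 2).const_mul _), integral_add (integrable_const _) (igT.const_mul t),
    integral_const_mul, integral_const_mul, integral_const] at step1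
  simp only [probReal_univ, smul_eq_mul, mul_one] at step1
  have := mul_le_mul_of_nonneg_left step2 ht
  linarith

/-- One-sided version of `conc` for centred variables. The truncation level is `T = d^{1/4}`: it is
small enough that `T a_d / √d` stays bounded in the Chernoff bound, and a moment of high enough order
makes the probability that some coordinate exceeds it at most a constant times `e^{-a_d²}`. -/
lemma conc_one {μ : Measure ℝ} [IsProbabilityMeasure μ] {g : ℝ → ℝ} (hg : Measurable g)
    (hi : ∀ n : ℕ, Integrable (fun x => |g x| ^ n) μ) (h0 : ∫ x, g x ∂μ = 0)
    {a : ℕ → ℝ} (ha : Sluggish a) : ∃ K > 0, ∃ c > 0, ∀ d : ℕ,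
    (Measure.pi fun _ : Fin d => μ).real {x | K * (a d * √(d:ℝ)) < ∑ i ∈ restIdx d, g (x i)}
      ≤ c * Real.exp (-a d ^ 2) := by
  obtain ⟨m, hm, hma⟩ := ha.lower
  obtain ⟨M, hM, hMa⟩ := ha.upper
  set m2 := ∫ x, |g x| ^ 2 ∂μ
  set m3 := ∫ x, |g x| ^ 3 ∂μ
  have hm2 : 0 ≤ m2 := integral_nonneg fun x => by positivity
  have hm3 : 0 ≤ m3 := integral_nonneg fun x => by positivity
  set K1 := m3 / m + Real.exp (2 * M) * m2 with hK1
  have hK10 : 0 ≤ K1 := by positivity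
  obtain ⟨n, hn⟩ := exists_nat_ge (M ^ 2)
  set mp := ∫ x, |g x| ^ (4 * (n + 1)) ∂μ
  have hmp : 0 ≤ mp := integral_nonneg fun x => by positivity
  refine ⟨K1 + 1, by positivity, mp + 1, by positivity, fun d => ?_⟩
  have had := ha.1 d
  rcases lt_or_ge d 2 with hd | hd
  · have he : restIdx d = ∅ := by
      rw [restIdx, Finset.filter_eq_empty_iff]
      intro i _
      have := i.2
      simp; omega
    have : {x : Fin d → ℝ | (K1 + 1) * (a d * √(d:ℝ)) < ∑ i ∈ restIdx d, g (x i)} = ∅ := by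
      rw [he]
      ext x
      simp only [Finset.sum_empty, mem_ofPred_eq, mem_empty_iff_false, iff_false, not_lt]
      positivity
    rw [this, measureReal_empty]
    positivity
  obtain ⟨ub1, ub2⟩ := hMa d hd
  have hd0 : (0:ℝ) < d := by positivity
  set r := √(d:ℝ) with hr
  have hr0 : 0 < r := Real.sqrt_pos.2 hd0
  have hrr : r ^ 2 = d := Real.sq_sqrt hd0.le
  set T := √r with hT
  have hT0 : 0 < T := Real.sqrt_pos.2 hr0
  have hTT : T ^ 2 = r := Real.sq_sqrt hr0.le
  set t := a d / r with ht
  have ht0 : 0 < t := by positivity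
  have hB : t * T ≤ 2 * M := by
    refine abs_le_of_sq_le_sq' ?_ (by positivity) |>.2
    rw [mul_pow, hTT, ht, div_pow, pow_two r, ← div_div, div_mul_cancel₀ _ hr0.ne',
      div_le_iff₀ hr0]
    nlinarith [sq_nonneg M]
  set gT := {x | |g x| ≤ T}.indicator g with hgT
  have hmT : Measurable gT := hg.indicator (measurableSet_le (by fun_prop) measurable_const)
  have b1 : ∀ x, |gT x| ≤ T := fun x => by
    by_cases h : |g x| ≤ T
    · rw [hgT, indicator_of_mem (by exact h)]; exact h
    · rw [hgT, indicator_of_notMem (by exact h), abs_zero]; exact hT0.le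
  have hmgf : ∫ x, Real.exp (t * gT x) ∂μ ≤ Real.exp (K1 * t ^ 2) := by
    refine (mgf_trunc hg hi h0 hT0 ht0.le hB).trans ?_
    refine le_trans ?_ (Real.add_one_le_exp _)
    have h1 : m3 / T ^ 2 ≤ m3 / m * t := by
      rw [hTT, ht, div_mul_div_comm]
      rw [div_le_div_iff₀ hr0 (by positivity)]
      nlinarith [mul_le_mul_of_nonneg_left (hma d) (mul_nonneg hm3 hr0.le)]
    have h2 := mul_le_mul_of_nonneg_left h1 ht0.le
    rw [hK1]
    nlinarith
  have hch := chernoff_pi (μ := μ) (restIdx d) (ε := (K1 + 1) * (a d * r)) hmT b1 ht0.le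
    (by positivity) hmgf
  have e1 : -t * ((K1 + 1) * (a d * r)) + d * (K1 * t ^ 2) = -a d ^ 2 := by
    rw [ht, ← hrr]; field_simp; ring
  rw [e1] at hch
  have htail : ∀ i : Fin d, (Measure.pi fun _ : Fin d => μ).real {x | T < |g (x i)|}
      ≤ mp / T ^ (4 * (n + 1)) := by
    intro i
    have hp := measurePreserving_eval (fun _ : Fin d => μ) i
    have := hp.measureReal_preimage (s := {y | T < |g y|})
      (measurableSet_lt measurable_const (by fun_prop)).nullMeasurableSet
    exact this.trans_le (tail_le hi hT0 _)
  have hTp : T ^ (4 * (n + 1)) = (d:ℝ) ^ (n + 1) := by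
    rw [pow_mul, show T ^ 4 = d by rw [← hrr, ← hTT]; ring]
  have hdn : ((d:ℝ) ^ n)⁻¹ ≤ Real.exp (-a d ^ 2) := by
    rw [Real.exp_neg]
    refine inv_anti₀ (Real.exp_pos _) ?_
    rw [← Real.exp_log hd0, ← Real.exp_nat_mul, Real.exp_le_exp]
    have : 0 ≤ Real.log d := Real.log_nonneg (by exact_mod_cast (by omega : 1 ≤ d))
    nlinarith
  have hunion : (Measure.pi fun _ : Fin d => μ).real (⋃ i : Fin d, {x | T < |g (x i)|})
      ≤ mp * Real.exp (-a d ^ 2) := by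
    refine (measureReal_iUnion_fintype_le _).trans ((Finset.sum_le_sum fun i _ => htail i).trans ?_)
    rw [Finset.sum_const, nsmul_eq_mul, hTp, Finset.card_univ, Fintype.card_fin]
    calc (d:ℝ) * (mp / (d:ℝ) ^ (n + 1)) = mp * ((d:ℝ) ^ n)⁻¹ := by
          rw [pow_succ]; field_simp
      _ ≤ _ := by gcongr
  have hsub : {x : Fin d → ℝ | (K1 + 1) * (a d * r) < ∑ i ∈ restIdx d, g (x i)}
      ⊆ {x | (K1 + 1) * (a d * r) ≤ ∑ i ∈ restIdx d, gT (x i)}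
        ∪ ⋃ i : Fin d, {x | T < |g (x i)|} := by
    intro x hx
    by_cases hex : ∃ i, T < |g (x i)|
    · exact Or.inr (mem_iUnion.2 hex)
    · left
      push Not at hex
      have : ∀ i, gT (x i) = g (x i) := fun i => by
        rw [hgT, indicator_of_mem (by exact hex i)]
      simp only [mem_ofPred_eq, this]
      exact le_of_lt hx
  refine (measureReal_mono hsub (measure_ne_top _ _)).trans ((measureReal_union_le _ _).trans ?_)
  linarith

/-- Moderate-deviation bound at the sluggish scale: sums over the coordinates `2, …, d` deviate
from their mean by at most `K a_d √d`, except on a set of probability `O(e^{-a_d²})`. -/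
lemma conc {μ : Measure ℝ} [IsProbabilityMeasure μ] {g : ℝ → ℝ} {w : ℝ} (hg : Measurable g)
    (hi : ∀ n : ℕ, Integrable (fun x => |g x| ^ n) μ) (h0 : ∫ x, g x ∂μ = w)
    {a : ℕ → ℝ} (ha : Sluggish a) : ∃ K > 0, ∃ c > 0, ∀ d : ℕ,
    (Measure.pi fun _ : Fin d => μ).real
      {x | K * (a d * √(d:ℝ)) < |∑ i ∈ restIdx d, (g (x i) - w)|} ≤ c * Real.exp (-a d ^ 2) := by
  have ig : Integrable g μ := by
    have := hi 1
    simp only [pow_one] at this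
    exact (integrable_norm_iff hg.aestronglyMeasurable).1 this
  have hi' : ∀ n : ℕ, Integrable (fun x => |g x - w| ^ n) μ := fun n => by
    refine Integrable.mono' (((hi n).add (integrable_const (|w| ^ n))).const_mul (2 ^ (n - 1)))
      (by fun_prop) (ae_of_all _ fun x => ?_)
    rw [Real.norm_eq_abs, abs_of_nonneg (by positivity)]
    calc |g x - w| ^ n ≤ (|g x| + |w|) ^ n := by gcongr; exact abs_sub _ _
      _ ≤ _ := add_pow_le (abs_nonneg _) (abs_nonneg _) n
  have hz : ∫ x, (g x - w) ∂μ = 0 := by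
    rw [integral_sub ig (integrable_const _), h0]; simp
  obtain ⟨K1, hK1, c1, hc1, h1⟩ := conc_one (g := fun x => g x - w) (by fun_prop) hi' hz ha
  obtain ⟨K2, hK2, c2, hc2, h2⟩ := conc_one (μ := μ) (g := fun x => -(g x - w)) (by fun_prop)
    (by simpa only [abs_neg] using hi') (by rw [integral_neg, hz, neg_zero]) ha
  refine ⟨K1 + K2, by positivity, c1 + c2, by positivity, fun d => ?_⟩
  have hs : 0 ≤ a d * √(d:ℝ) := by have := ha.1 d; positivity
  have hsub : {x : Fin d → ℝ | (K1 + K2) * (a d * √(d:ℝ)) < |∑ i ∈ restIdx d, (g (x i) - w)|}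
      ⊆ {x | K1 * (a d * √(d:ℝ)) < ∑ i ∈ restIdx d, (g (x i) - w)}
        ∪ {x | K2 * (a d * √(d:ℝ)) < ∑ i ∈ restIdx d, -(g (x i) - w)} := by
    intro x hx
    simp only [mem_ofPred_eq, mem_union, Finset.sum_neg_distrib] at hx ⊢
    rcases lt_abs.1 hx with h | h
    · left; nlinarith
    · right; nlinarith
  refine (measureReal_mono hsub (measure_ne_top _ _)).trans ((measureReal_union_le _ _).trans ?_)
  linarith [h1 d, h2 d]

/-! ### Typical sets and normal approximation of the log-ratio -/

/-- The typical set: the empirical sums of `((log ρ)')²`, `(log ρ)''` and `e^{|·|}` over the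
coordinates `2, …, d` are within `K a_d √d` of their means. -/
def Good (ρ : ℝ → ℝ) (K : ℝ) (a : ℕ → ℝ) (d : ℕ) : Set (Fin d → ℝ) :=
  {x | |∑ i ∈ restIdx d, ((dl ρ (x i)) ^ 2 - Jc ρ)| ≤ K * (a d * √(d:ℝ))} ∩
  ({x | |∑ i ∈ restIdx d, (d2l ρ (x i) - -Jc ρ)| ≤ K * (a d * √(d:ℝ))} ∩
  {x | |∑ i ∈ restIdx d, (Real.exp |x i| - rhoE ρ fun t => Real.exp |t|)| ≤ K * (a d * √(d:ℝ))})

lemma measurableSet_good {ρ : ℝ → ℝ} (h : Target ρ) (K : ℝ) (a : ℕ → ℝ) (d : ℕ) :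
    MeasurableSet (Good ρ K a d) := by
  have h1 := h.cont_dl.measurable
  have h2 := h.cont_d2l.measurable
  exact (measurableSet_le (by fun_prop) measurable_const).inter
    ((measurableSet_le (by fun_prop) measurable_const).inter
      (measurableSet_le (by fun_prop) measurable_const))

lemma Target.moments {ρ : ℝ → ℝ} (h : Target ρ) {g : ℝ → ℝ} {C s : ℝ} (hg : Measurable g)
    (hb : ∀ x, |g x| ≤ C * Real.exp (s * |x|)) (n : ℕ) :
    Integrable (fun x => |g x| ^ n) (mu ρ) := by
  refine h.integrable_of_bound (C := C ^ n) (s := n * s) (by fun_prop) fun x => ?_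
  rw [abs_pow, abs_abs]
  calc |g x| ^ n ≤ (C * Real.exp (s * |x|)) ^ n := by gcongr; exact hb x
    _ = _ := by rw [mul_pow, ← Real.exp_nat_mul]; ring_nf

/-- The typical set has almost full probability: `conc` applied to each of the three sums. -/
lemma good_prob {ρ : ℝ → ℝ} (h : Target ρ) {a : ℕ → ℝ} (ha : Sluggish a) :
    ∃ K > 0, ∃ c > 0, ∀ d : ℕ,
      pm ρ d ((Good ρ K a d)ᶜ) ≤ ENNReal.ofReal (c * Real.exp (-(a d) ^ 2)) := by
  have := h.prob
  obtain ⟨A, hA, t⟩ := h.tame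
  obtain ⟨C, hC, hsq⟩ := h.bound_sq
  have m1 := h.cont_dl.measurable
  have m2 := h.cont_d2l.measurable
  obtain ⟨K1, hK1, c1, hc1, h1⟩ := conc (μ := mu ρ) (g := fun x => dl ρ x ^ 2) (w := Jc ρ) (by fun_prop)
    (h.moments (by fun_prop) hsq) (h.integral_mu _) ha
  obtain ⟨K2, hK2, c2, hc2, h2⟩ := conc (μ := mu ρ) (g := d2l ρ) m2
    (h.moments m2 t.b2) h.integral_d2l ha
  obtain ⟨K3, hK3, c3, hc3, h3⟩ := conc (μ := mu ρ) (g := fun x => Real.exp |x|) (by fun_prop)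
    (h.moments (C := 1) (s := 1) (by fun_prop) (fun x => by simp)) (h.integral_mu _) ha
  refine ⟨K1 + K2 + K3, by positivity, c1 + c2 + c3, by positivity, fun d => ?_⟩
  have hs : 0 ≤ a d * √(d:ℝ) := by have := ha.1 d; positivity
  have hsub : (Good ρ (K1 + K2 + K3) a d)ᶜ ⊆
      {x | K1 * (a d * √(d:ℝ)) < |∑ i ∈ restIdx d, ((dl ρ (x i)) ^ 2 - Jc ρ)|} ∪
      ({x | K2 * (a d * √(d:ℝ)) < |∑ i ∈ restIdx d, (d2l ρ (x i) - -Jc ρ)|} ∪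
      {x | K3 * (a d * √(d:ℝ)) <
        |∑ i ∈ restIdx d, (Real.exp |x i| - rhoE ρ fun t => Real.exp |t|)|}) := by
    intro x hx
    by_contra hcon
    simp only [mem_union, mem_ofPred_eq, not_or, not_lt] at hcon
    have p1 := mul_nonneg hK1.le hs
    have p2 := mul_nonneg hK2.le hs
    have p3 := mul_nonneg hK3.le hs
    refine hx ⟨?_, ?_, ?_⟩ <;> simp only [mem_ofPred_eq]
    · linarith [hcon.1]
    · linarith [hcon.2.1]
    · linarith [hcon.2.2]
  have hpm : pm ρ d = Measure.pi fun _ : Fin d => mu ρ := rfl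
  rw [hpm, ← ofReal_measureReal (measure_ne_top _ _)]
  refine ENNReal.ofReal_le_ofReal ?_
  refine (measureReal_mono hsub (measure_ne_top _ _)).trans ((measureReal_union_le _ _).trans ?_)
  have hu := measureReal_union_le (μ := Measure.pi fun _ : Fin d => mu ρ)
    {x | K2 * (a d * √(d:ℝ)) < |∑ i ∈ restIdx d, (d2l ρ (x i) - -Jc ρ)|}
    {x | K3 * (a d * √(d:ℝ)) <
        |∑ i ∈ restIdx d, (Real.exp |x i| - rhoE ρ fun t => Real.exp |t|)|}
  linarith [h1 d, h2 d, h3 d]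

lemma Sluggish.le_sqrt {a : ℕ → ℝ} (ha : Sluggish a) :
    ∃ M > 0, ∀ d : ℕ, 1 ≤ d → a d ≤ M * √(d:ℝ) := by
  obtain ⟨M, hM, hMa⟩ := ha.upper
  refine ⟨2 * M + a 1, by have := ha.1 1; positivity, fun d hd => ?_⟩
  have h1 := ha.1 1
  rcases eq_or_lt_of_le hd with h | h
  · subst h
    rw [Nat.cast_one, Real.sqrt_one]
    linarith
  · have hd1 : (1:ℝ) ≤ √(d:ℝ) := Real.one_le_sqrt.2 (by exact_mod_cast hd)
    have h2 : a d ≤ 2 * M * √(d:ℝ) := by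
      refine abs_le_of_sq_le_sq' ((hMa d h).2.trans ?_) (by positivity) |>.2
      have : √(d:ℝ) ≤ √(d:ℝ) ^ 2 := by nlinarith
      calc 2 * M ^ 2 * √(d:ℝ) ≤ 4 * M ^ 2 * √(d:ℝ) ^ 2 := by
            have := mul_le_mul_of_nonneg_left this (sq_nonneg M)
            nlinarith [mul_nonneg (sq_nonneg M) (sq_nonneg √(d:ℝ))]
        _ = _ := by ring
    nlinarith

/-- The log-ratio of the coordinates `2, …, d` under a proposal with standardised increments
`z`. -/
def Srest (ρ : ℝ → ℝ) (σ : ℝ) {d : ℕ} (x z : Fin d → ℝ) : ℝ :=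
  ∑ i ∈ restIdx d, (Real.log (ρ (x i + σ * z i)) - Real.log (ρ (x i)))

lemma restIdx_eq (d : ℕ) [NeZero d] : restIdx d = Finset.univ.erase 0 := by
  ext i
  rw [restIdx, Finset.mem_filter, Finset.mem_erase, Ne, Ne, Fin.val_eq_zero_iff]
  exact and_comm

lemma card_restIdx {d : ℕ} (hd : 1 ≤ d) : ((restIdx d).card : ℝ) = d - 1 := by
  have : NeZero d := ⟨by omega⟩
  rw [restIdx_eq, Finset.card_erase_of_mem (Finset.mem_univ _), Finset.card_univ,
    Fintype.card_fin, Nat.cast_sub hd, Nat.cast_one]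

/-- On the typical set the log-ratio of the remaining coordinates is close to `N(-l²J/2, l²J)` in
total variation (tested on continuous functions). -/
lemma stein_good {ρ : ℝ → ℝ} (h : Target ρ) {l : ℝ} (hl : 0 < l) {a : ℕ → ℝ} (ha : Sluggish a)
    {K : ℝ} (hK : 0 < K) : ∃ C > 0, ∀ d : ℕ, 1 ≤ d → ∀ x ∈ Good ρ K a d, ∀ φ : ℝ → ℝ,
      Continuous φ → (∀ z, |φ z| ≤ 1) →
      |∫ z, φ (Srest ρ (l / √(d:ℝ)) x z) ∂(stdPi (Fin d))
        - ∫ z, φ (-(l ^ 2 * Jc ρ) / 2 + √(l ^ 2 * Jc ρ) * z) ∂stdG| ≤ C * (a d / √(d:ℝ)) := by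
  have hJ := h.J_pos
  obtain ⟨A, hA, t⟩ := h.tame
  obtain ⟨C, hC, hst⟩ := stein_sum (v := l ^ 2 * Jc ρ) (κ := l + 1) (by positivity) (by positivity)
  obtain ⟨m, hm, hma⟩ := ha.lower
  obtain ⟨M, hM, hMa⟩ := ha.le_sqrt
  set E := rhoE ρ fun t => Real.exp |t| with hE
  have hE0 : 0 ≤ E := integral_nonneg fun x => by have := h.pos x; positivity
  set Q := 9 * A ^ 2 + 6 * A with hQ
  refine ⟨C * (l ^ 2 * (K + Jc ρ / m) + l ^ 2 * (K + Jc ρ / m)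
    + l ^ 3 * Q * (K * M + E) / m), by positivity, fun d hd x hx φ hφ hφ1 => ?_⟩
  obtain ⟨hx1, hx2, hx3⟩ := hx
  simp only [mem_ofPred_eq] at hx1 hx2 hx3
  have hd0 : (1:ℝ) ≤ d := by exact_mod_cast hd
  set r := √(d:ℝ) with hr
  have hr1 : 1 ≤ r := Real.one_le_sqrt.2 hd0
  have hr0 : 0 < r := by linarith
  have hrr : (d:ℝ) = r ^ 2 := (Real.sq_sqrt (by linarith)).symm
  set σ := l / r with hσ
  have hσ0 : 0 < σ := by positivity
  have hσl : σ ≤ l := div_le_self hl.le hr1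
  have hcard := card_restIdx hd
  have had := ha.1 d
  have sc := fun i z => t.scaled (by norm_num) (by norm_num) hA.le hσ0.le hσl (x i) z
  have key := hst (Fin d) (restIdx d)
    (fun i z => Real.log (ρ (x i + σ * z)) - Real.log (ρ (x i)))
    (fun i z => σ * dl ρ (x i + σ * z)) (fun i => σ * dl ρ (x i))
    (fun i => σ ^ 2 * d2l ρ (x i) / 2)
    (fun i => σ * (6 * A * Real.exp (1 / 4 * |x i|)))
    (fun i => σ * (6 * A * Real.exp (1 / 4 * |x i|) * σ))
    (fun i => 6 * A * Real.exp (1 / 4 * |x i|) * σ ^ 3) (-(l ^ 2 * Jc ρ) / 2)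
    (fun i z => by
      have e : HasDerivAt (fun z => x i + σ * z) σ z := by
        simpa using ((hasDerivAt_id' z).const_mul σ).const_add (x i)
      exact (((t.h1 _).comp z e).sub_const _).congr_deriv (mul_comm _ _))
    (fun i => by have := h.cont_dl; fun_prop)
    (fun i z => by
      rw [abs_mul, abs_of_pos hσ0, mul_assoc]
      exact mul_le_mul_of_nonneg_left (sc i z).1 hσ0.le)
    (fun i z => by
      rw [← mul_sub, abs_mul, abs_of_pos hσ0, mul_assoc]
      exact mul_le_mul_of_nonneg_left (sc i z).2.2.1 hσ0.le)
    (fun i z => by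
      refine le_trans (le_of_eq ?_) (sc i z).2.2.2.2
      congr 1; ring)
    φ hφ hφ1
  refine key.trans ?_
  rw [mul_assoc]
  refine mul_le_mul_of_nonneg_left ?_ hC.le
  have hσ2 : σ ^ 2 = l ^ 2 / r ^ 2 := by rw [hσ, div_pow]
  have h1r : 1 / r ≤ 1 / m * (a d / r) := by
    rw [div_mul_div_comm, div_le_div_iff₀ hr0 (by positivity)]
    nlinarith [hma d]
  have hJr : l ^ 2 * (K * (a d * r) + Jc ρ) / r ^ 2 ≤ l ^ 2 * (K + Jc ρ / m) * (a d / r) := by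
    have e : l ^ 2 * (K * (a d * r) + Jc ρ) / r ^ 2
        = l ^ 2 * (K * (a d / r) + Jc ρ * (1 / r) * (1 / r)) := by field_simp
    have : Jc ρ * (1 / r) * (1 / r) ≤ Jc ρ * (1 / m * (a d / r)) * 1 := by
      gcongr
      rw [div_le_one hr0]; exact hr1
    rw [e]
    calc _ ≤ l ^ 2 * (K * (a d / r) + Jc ρ * (1 / m * (a d / r)) * 1) := by gcongr
      _ = _ := by ring
  have q1 : |∑ i ∈ restIdx d, (σ * dl ρ (x i)) ^ 2 - l ^ 2 * Jc ρ|
      ≤ l ^ 2 * (K + Jc ρ / m) * (a d / r) := by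
    refine le_trans ?_ hJr
    have e : ∑ i ∈ restIdx d, (σ * dl ρ (x i)) ^ 2 - l ^ 2 * Jc ρ
        = l ^ 2 * (∑ i ∈ restIdx d, ((dl ρ (x i)) ^ 2 - Jc ρ) - Jc ρ) / r ^ 2 := by
      rw [Finset.sum_sub_distrib, Finset.sum_const, nsmul_eq_mul, hcard, hrr]
      simp only [mul_pow, ← Finset.mul_sum, hσ2]
      field_simp; ring
    rw [e, abs_div, abs_mul, abs_of_nonneg (sq_nonneg l), abs_of_nonneg (sq_nonneg r)]
    gcongr
    refine (abs_sub _ _).trans ?_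
    rw [abs_of_pos hJ]; linarith
  have q2 : |∑ i ∈ restIdx d, σ ^ 2 * d2l ρ (x i) / 2 - -(l ^ 2 * Jc ρ) / 2|
      ≤ l ^ 2 * (K + Jc ρ / m) * (a d / r) := by
    refine le_trans ?_ hJr
    have e : ∑ i ∈ restIdx d, σ ^ 2 * d2l ρ (x i) / 2 - -(l ^ 2 * Jc ρ) / 2
        = l ^ 2 * ((∑ i ∈ restIdx d, (d2l ρ (x i) - -Jc ρ) + Jc ρ) / 2) / r ^ 2 := by
      rw [Finset.sum_sub_distrib, Finset.sum_const, nsmul_eq_mul, hcard, hrr]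
      simp only [← Finset.mul_sum, ← Finset.sum_div, hσ2]
      field_simp; ring
    rw [e, abs_div, abs_mul, abs_of_nonneg (sq_nonneg l), abs_of_nonneg (sq_nonneg r)]
    gcongr
    rw [abs_div, abs_two, div_le_iff₀ two_pos]
    refine (abs_add_le _ _).trans ?_
    rw [abs_of_pos hJ]
    nlinarith [mul_nonneg hK.le (mul_nonneg had.le hr0.le)]
  have q3 : ∑ i ∈ restIdx d, (|σ * dl ρ (x i)| * (σ * (6 * A * Real.exp (1 / 4 * |x i|) * σ))
      + |σ ^ 2 * d2l ρ (x i) / 2| * (σ * (6 * A * Real.exp (1 / 4 * |x i|)))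
      + 6 * A * Real.exp (1 / 4 * |x i|) * σ ^ 3) ≤ l ^ 3 * Q * (K * M + E) / m * (a d / r) := by
    have p : ∀ i, |σ * dl ρ (x i)| * (σ * (6 * A * Real.exp (1 / 4 * |x i|) * σ))
      + |σ ^ 2 * d2l ρ (x i) / 2| * (σ * (6 * A * Real.exp (1 / 4 * |x i|)))
      + 6 * A * Real.exp (1 / 4 * |x i|) * σ ^ 3 ≤ σ ^ 3 * Q * Real.exp |x i| := by
      intro i
      have b1 := t.b1 (x i)
      have b2 := t.b2 (x i)
      set w := Real.exp (1 / 4 * |x i|)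
      have hw1 : 1 ≤ w := Real.one_le_exp (by positivity)
      have hw4 : Real.exp |x i| = w ^ 4 := by
        rw [← Real.exp_nat_mul]; congr 1; push_cast; ring
      rw [abs_mul, abs_of_pos hσ0, abs_div, abs_mul, abs_two, abs_of_nonneg (sq_nonneg σ), hw4]
      have w2 : w ^ 2 ≤ w ^ 4 := pow_le_pow_right₀ hw1 (by norm_num)
      have w1 : w ≤ w ^ 4 := le_self_pow₀ hw1 (by norm_num)
      calc _ ≤ σ * (A * w) * (σ * (6 * A * w * σ)) + σ ^ 2 * (A * w) / 2 * (σ * (6 * A * w))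
            + 6 * A * w * σ ^ 3 := by gcongr
        _ = σ ^ 3 * (9 * A ^ 2 * w ^ 2 + 6 * A * w) := by ring
        _ ≤ σ ^ 3 * (9 * A ^ 2 * w ^ 4 + 6 * A * w ^ 4) := by gcongr
        _ = _ := by rw [hQ]; ring
    have hsum : ∑ i ∈ restIdx d, Real.exp |x i| ≤ (K * M + E) * r ^ 2 := by
      have e := (le_abs_self _).trans hx3
      rw [Finset.sum_sub_distrib, Finset.sum_const, nsmul_eq_mul, hcard, hrr] at e
      have e2 : K * (a d * r) ≤ K * (M * r * r) := by
        have := hMa d hd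
        gcongr
      nlinarith
    calc _ ≤ ∑ i ∈ restIdx d, σ ^ 3 * Q * Real.exp |x i| := Finset.sum_le_sum fun i _ => p i
      _ = σ ^ 3 * Q * ∑ i ∈ restIdx d, Real.exp |x i| := by rw [Finset.mul_sum]
      _ ≤ σ ^ 3 * Q * ((K * M + E) * r ^ 2) := by gcongr
      _ = l ^ 3 * Q * (K * M + E) * (1 / r) := by rw [hσ]; field_simp
      _ ≤ l ^ 3 * Q * (K * M + E) * (1 / m * (a d / r)) := by gcongr
      _ = _ := by ring
  rw [add_mul, add_mul]
  linarith

/-! ### Comparison of the generators -/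

/-- The acceptance function `F u = E acc (u + S)` of a log-ratio `S` that is `δ`-close to
`N(-v/2, v)` in total variation: its value at `0` and its first-order expansion. -/
lemma acceptance_expansion {Ω : Type*} [MeasurableSpace Ω] {P : Measure Ω} [IsProbabilityMeasure P]
    {S : Ω → ℝ} (hS : Measurable S) {v δ C : ℝ} (hv : 0 < v)
    (hφ : ∀ φ : ℝ → ℝ, Continuous φ → (∀ z, |φ z| ≤ 1) →
      |∫ ω, φ (S ω) ∂P - ∫ z, φ (-v / 2 + √v * z) ∂stdG| ≤ δ)
    (hT : ∀ u : ℝ, |∫ z, (acc (u + (-v / 2 + √v * z)) - acc (-v / 2 + √v * z)) ∂stdG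
      - u * stdCDF (-√v / 2)| ≤ C * u ^ 2) :
    |∫ ω, acc (S ω) ∂P - 2 * stdCDF (-√v / 2)| ≤ δ ∧
    ∀ u, |∫ ω, acc (u + S ω) ∂P - ∫ ω, acc (S ω) ∂P - u * stdCDF (-√v / 2)|
      ≤ |u| * δ + C * u ^ 2 := by
  constructor
  · rw [← gauss_acc hv]
    exact hφ acc continuous_acc abs_acc_le
  · intro u
    rcases eq_or_ne u 0 with rfl | hu
    · simp
    have hu' : 0 < |u| := abs_pos.2 hu
    -- the difference quotient of `acc` is an admissible test function
    have h1 := hφ (fun s => (acc (u + s) - acc s) / u) (by fun_prop) fun s => by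
      rw [abs_div, div_le_one hu']
      simpa using abs_acc_sub_le s (u + s)
    rw [integral_div, integral_div, ← sub_div, abs_div, div_le_iff₀ hu'] at h1
    have i1 : ∀ w, Integrable (fun ω => acc (w + S ω)) P := fun w =>
      Integrable.of_bound (by fun_prop) 1 (ae_of_all _ fun z => abs_acc_le _)
    have i0 : Integrable (fun ω => acc (S ω)) P := by simpa using i1 0
    rw [integral_sub (i1 u) i0] at h1
    have h2 := hT u
    calc _ = |(∫ ω, acc (u + S ω) ∂P - ∫ ω, acc (S ω) ∂P
          - ∫ z, (acc (u + (-v / 2 + √v * z)) - acc (-v / 2 + √v * z)) ∂stdG)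
          + (∫ z, (acc (u + (-v / 2 + √v * z)) - acc (-v / 2 + √v * z)) ∂stdG
          - u * stdCDF (-√v / 2))| := by congr 1; ring
      _ ≤ δ * |u| + C * u ^ 2 := (abs_add_le _ _).trans (add_le_add h1 h2)
      _ = _ := by ring

lemma measurable_Srest {ρ : ℝ → ℝ} (hm : Measurable ρ) (σ : ℝ) {d : ℕ} (x : Fin d → ℝ) :
    Measurable (Srest ρ σ x) := by
  unfold Srest; fun_prop

lemma gaussPi_eq (l : ℝ) {d : ℕ} (x : Fin d → ℝ) :
    gaussPi l d x = (stdPi (Fin d)).map fun z i => x i + l / √(d:ℝ) * z i := by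
  have : ∀ i : Fin d, IsProbabilityMeasure (stdG.map fun z => x i + l / √(d:ℝ) * z) := fun i =>
    Measure.isProbabilityMeasure_map (by fun_prop)
  have h := Measure.pi_map_pi (μ := fun _ : Fin d => stdG)
    (f := fun i z => x i + l / √(d:ℝ) * z) (fun i => by fun_prop)
  rw [stdPi, h, gaussPi]
  congr 1
  funext i
  rw [map_stdG, div_pow, Real.sq_sqrt (Nat.cast_nonneg d)]

/-- The acceptance probability as a function of the log-ratio, with the first coordinate split
off. -/
lemma ratio_eq {ρ : ℝ → ℝ} (hp : ∀ x, 0 < ρ x) {d : ℕ} [NeZero d] (σ : ℝ) (x z : Fin d → ℝ) :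
    min 1 ((∏ i, ρ (x i + σ * z i)) / ∏ i, ρ (x i))
      = acc (Real.log (ρ (x 0 + σ * z 0)) - Real.log (ρ (x 0)) + Srest ρ σ x z) := by
  rw [acc, Srest, restIdx_eq, Finset.add_sum_erase Finset.univ
    (fun i => Real.log (ρ (x i + σ * z i)) - Real.log (ρ (x i))) (Finset.mem_univ 0),
    Real.exp_sum, ← Finset.prod_div_distrib]
  congr 1
  refine Finset.prod_congr rfl fun i _ => ?_
  rw [Real.exp_sub, Real.exp_log (hp _), Real.exp_log (hp _)]

lemma Srest_update {ρ : ℝ → ℝ} {d : ℕ} [NeZero d] (σ t : ℝ) (x z : Fin d → ℝ) :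
    Srest ρ σ x (Function.update z 0 t) = Srest ρ σ x z := by
  rw [Srest, Srest, restIdx_eq]
  refine Finset.sum_congr rfl fun i hi => ?_
  rw [Function.update_of_ne (Finset.ne_of_mem_erase hi)]

set_option maxHeartbeats 2000000 in
/-- Integrating out the coordinates `2, …, d` first writes the generator as a one-dimensional
Gaussian integral. -/
lemma Gd_eq {ρ : ℝ → ℝ} (h : Target ρ) (l : ℝ) {d : ℕ} [NeZero d] {f : ℝ → ℝ}
    (hf : Continuous f) (x : Fin d → ℝ) {c κ : ℝ}
    (hb : ∀ t, |f (x 0 + l / √(d:ℝ) * t) - f (x 0)| ≤ c * Real.exp (κ * |t|)) :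
    Gd ρ l d f x = d * ∫ t, (f (x 0 + l / √(d:ℝ) * t) - f (x 0)) *
      (∫ z, acc (Real.log (ρ (x 0 + l / √(d:ℝ) * t)) - Real.log (ρ (x 0))
        + Srest ρ (l / √(d:ℝ)) x z) ∂(stdPi (Fin d))) ∂stdG := by
  have hm := h.meas
  have hfm := hf.measurable
  set σ := l / √(d:ℝ) with hσ
  have hSm := measurable_Srest hm σ x
  have iG : Integrable (fun t => f (x 0 + σ * t) - f (x 0)) stdG :=
    integrable_of_exp_bound (by fun_prop) hb
  have ham : Measurable acc := continuous_acc.measurable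
  have hmap : Measurable fun (z : Fin d → ℝ) i => x i + l / √(d:ℝ) * z i :=
    measurable_pi_lambda _ fun i => by fun_prop
  have hint : Measurable fun y : Fin d → ℝ =>
      (f (y 0) - f (x 0)) * min 1 ((∏ i, ρ (y i)) / ∏ i, ρ (x i)) := by fun_prop
  have hI : Measurable fun p : ℝ × (Fin d → ℝ) => (f (x 0 + σ * p.1) - f (x 0)) *
      acc (Real.log (ρ (x 0 + σ * p.1)) - Real.log (ρ (x 0)) + Srest ρ σ x p.2) := by fun_prop
  rw [Gd, gaussPi_eq, integral_map hmap.aemeasurable hint.aestronglyMeasurable]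
  congr 1
  simp only [← hσ, ratio_eq h.pos]
  have hle : ∀ a b : ℝ, ‖a * acc b‖ ≤ ‖a‖ := fun a b => by
    rw [norm_mul]
    exact mul_le_of_le_one_right (norm_nonneg _) (abs_acc_le b)
  have hF : Measurable fun z : Fin d → ℝ => (f (x 0 + σ * z 0) - f (x 0)) *
      acc (Real.log (ρ (x 0 + σ * z 0)) - Real.log (ρ (x 0)) + Srest ρ σ x z) := by fun_prop
  have iF : Integrable (fun z : Fin d → ℝ => (f (x 0 + σ * z 0) - f (x 0)) *
      acc (Real.log (ρ (x 0 + σ * z 0)) - Real.log (ρ (x 0)) + Srest ρ σ x z))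
      (stdPi (Fin d)) :=
    (integrable_eval 0 iG).mono hF.aestronglyMeasurable (ae_of_all _ fun z => hle _ _)
  rw [integral_update 0 iF]
  simp only [Function.update_self, Srest_update]
  rw [integral_integral_swap]
  · simp only [integral_const_mul]
  · exact (iG.comp_snd (stdPi (Fin d))).mono
      (hI.comp measurable_swap).aestronglyMeasurable (ae_of_all _ fun z => hle _ _)

lemma integral_id_stdG : ∫ z, z ∂stdG = 0 := by
  simp [stdG, integral_id_gaussianReal]

lemma integral_sq_stdG : ∫ z, z ^ 2 ∂stdG = 1 := by
  have h := stein_ibp (G := fun z => z) (G' := fun _ => 1) (C := 1) (c := 1)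
    (fun z => hasDerivAt_id' z) continuous_const
    (fun z => by simpa using abs_le_exp_abs z) (fun z => by simp)
  simpa [pow_two] using h

/-- The algebra behind the expansion of one increment: `Δ` and `D` are the increments of `f` and
`log ρ`, `F0` and `FD` the acceptance function at `0` and at `D`. -/
lemma increment_bound {Δ D F0 FD p fp fpp Lp σ t E δ C B b : ℝ}
    (hσ : 0 ≤ σ) (hδ : 0 ≤ δ) (hC : 0 ≤ C) (hB : 0 ≤ B) (hb : 0 ≤ b) (hE : 1 ≤ E)
    (hp0 : 0 ≤ p) (hp1 : p ≤ 1) (ht : |t| ≤ E) (hF0 : |F0| ≤ 1)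
    (h1 : |Δ| ≤ B * σ * E) (h2 : |Δ - fp * (σ * t)| ≤ B * σ ^ 2 * E)
    (h3 : |Δ - fp * (σ * t) - fpp / 2 * (σ * t) ^ 2| ≤ B * σ ^ 3 * E)
    (h4 : |D| ≤ b * σ * E) (h5 : |D - Lp * (σ * t)| ≤ b * σ ^ 2 * E)
    (hfpp : |fpp| ≤ B) (hLp : |Lp| ≤ b) (h6 : |F0 - 2 * p| ≤ δ)
    (h7 : |FD - F0 - D * p| ≤ |D| * δ + C * D ^ 2) :
    |Δ * FD - (F0 * fp * σ * t + p * (fpp + fp * Lp) * σ ^ 2 * t ^ 2)|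
      ≤ B * (1 + 2 * b + C * b ^ 2) * σ ^ 3 * E ^ 3 + B * (1 + b) * σ ^ 2 * δ * E ^ 3 := by
  have hE2 : E ^ 2 ≤ E ^ 3 := pow_le_pow_right₀ hE (by norm_num)
  have hE1 : E ≤ E ^ 3 := le_self_pow₀ hE (by norm_num)
  have e1 : |F0 * (Δ - fp * (σ * t) - fpp / 2 * (σ * t) ^ 2)| ≤ B * σ ^ 3 * E ^ 3 := by
    rw [abs_mul]
    calc _ ≤ 1 * (B * σ ^ 3 * E) := by gcongr
      _ ≤ _ := by rw [one_mul]; gcongr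
  have e2 : |(F0 - 2 * p) * fpp / 2 * (σ * t) ^ 2| ≤ B * σ ^ 2 * δ * E ^ 3 := by
    rw [abs_mul, abs_div, abs_mul, abs_pow, abs_mul, abs_two, abs_of_nonneg hσ]
    calc _ ≤ δ * B / 2 * (σ * E) ^ 2 := by gcongr
      _ = B * σ ^ 2 * δ * E ^ 2 / 2 := by ring
      _ ≤ B * σ ^ 2 * δ * E ^ 2 := half_le_self (by positivity)
      _ ≤ _ := by gcongr
  have e3 : |Δ * (FD - F0 - D * p)|
      ≤ B * b * σ ^ 2 * δ * E ^ 3 + B * (C * b ^ 2) * σ ^ 3 * E ^ 3 := by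
    rw [abs_mul]
    have hD2 : D ^ 2 ≤ (b * σ * E) ^ 2 := by
      rw [← sq_abs]; gcongr
    calc _ ≤ (B * σ * E) * ((b * σ * E) * δ + C * (b * σ * E) ^ 2) := by
          refine mul_le_mul h1 (h7.trans ?_) (abs_nonneg _) (by positivity)
          gcongr
      _ = B * b * σ ^ 2 * δ * E ^ 2 + B * (C * b ^ 2) * σ ^ 3 * E ^ 3 := by ring
      _ ≤ _ := by gcongr
  have e4 : |p * Δ * (D - Lp * (σ * t))| ≤ B * b * σ ^ 3 * E ^ 3 := by
    rw [abs_mul, abs_mul, abs_of_nonneg hp0]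
    calc _ ≤ 1 * (B * σ * E) * (b * σ ^ 2 * E) := by gcongr
      _ = B * b * σ ^ 3 * E ^ 2 := by ring
      _ ≤ _ := by gcongr
  have e5 : |p * (Δ - fp * (σ * t)) * (Lp * (σ * t))| ≤ B * b * σ ^ 3 * E ^ 3 := by
    rw [abs_mul, abs_mul, abs_of_nonneg hp0, abs_mul, abs_mul, abs_of_nonneg hσ]
    calc _ ≤ 1 * (B * σ ^ 2 * E) * (b * (σ * E)) := by gcongr
      _ = B * b * σ ^ 3 * E ^ 2 := by ring
      _ ≤ _ := by gcongr
  have key : Δ * FD - (F0 * fp * σ * t + p * (fpp + fp * Lp) * σ ^ 2 * t ^ 2)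
      = F0 * (Δ - fp * (σ * t) - fpp / 2 * (σ * t) ^ 2) + (F0 - 2 * p) * fpp / 2 * (σ * t) ^ 2
        + Δ * (FD - F0 - D * p) + p * Δ * (D - Lp * (σ * t))
        + p * (Δ - fp * (σ * t)) * (Lp * (σ * t)) := by ring
  rw [key]
  refine ((abs_add_le _ _).trans (add_le_add ((abs_add_le _ _).trans (add_le_add
    ((abs_add_le _ _).trans (add_le_add ((abs_add_le _ _).trans (add_le_add e1 e2)) e3)) e4))
      e5)).trans (le_of_eq (by ring))

lemma stdCDF_nonneg (t : ℝ) : 0 ≤ stdCDF t := ENNReal.toReal_nonneg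

lemma stdCDF_le_one (t : ℝ) : stdCDF t ≤ 1 := measureReal_le_one (μ := stdG)

set_option maxHeartbeats 2000000 in
/-- The generator bound at a point where the log-ratio of the other coordinates is `δ`-close to
`N(-l²J/2, l²J)`. -/
lemma generator_bound {ρ : ℝ → ℝ} (h : Target ρ) {l : ℝ} (hl : 0 < l) : ∃ Q > 0,
    ∀ (d : ℕ) [NeZero d] (f : ℝ → ℝ), MemS 3 f → ∀ (x : Fin d → ℝ) (δ : ℝ), 0 ≤ δ →
      (∀ φ : ℝ → ℝ, Continuous φ → (∀ z, |φ z| ≤ 1) →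
        |∫ z, φ (Srest ρ (l / √(d:ℝ)) x z) ∂(stdPi (Fin d))
          - ∫ z, φ (-(l ^ 2 * Jc ρ) / 2 + √(l ^ 2 * Jc ρ) * z) ∂stdG| ≤ δ) →
      |Gop ρ l f (x 0) - Gd ρ l d f x|
        ≤ Q * (∑ i ∈ Finset.Icc 1 3, normIS (iteratedDeriv i f) (1/2)) * Real.exp |x 0|
          * (1 / √(d:ℝ) + δ) := by
  have hJ := h.J_pos
  have hv : 0 < l ^ 2 * Jc ρ := by positivity
  obtain ⟨A, hA, tL⟩ := h.tame
  obtain ⟨C, hC, hT⟩ := gauss_acc_taylor hv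
  set I := ∫ t, Real.exp (3 * (l + 1) * |t|) ∂stdG with hI
  have hI0 : 0 ≤ I := integral_nonneg fun t => (Real.exp_pos _).le
  set Q1 := 1 + 12 * A + 36 * A ^ 2 * C with hQ1
  set Q2 := 1 + 6 * A with hQ2
  refine ⟨6 * I * (Q1 * l ^ 3 + Q2 * l ^ 2) + 1, by positivity, fun d hd f hf x δ hδ hφ => ?_⟩
  have hd0 : (0:ℝ) < d := by exact_mod_cast Nat.pos_of_ne_zero hd.out
  have hd1 : (1:ℝ) ≤ √(d:ℝ) :=
    Real.one_le_sqrt.2 (by exact_mod_cast Nat.one_le_iff_ne_zero.2 hd.out)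
  have tf := hf.tame le_rfl (s := 1 / 2) (by norm_num)
  set N := ∑ i ∈ Finset.Icc 1 3, normIS (iteratedDeriv i f) (1/2) with hN
  have hN0 : 0 ≤ N := Finset.sum_nonneg fun i _ => normIS_nonneg _ _
  set σ := l / √(d:ℝ) with hσ
  have hσ0 : 0 ≤ σ := by positivity
  have hσl : σ ≤ l := div_le_self hl.le hd1
  have hdσ2 : d * σ ^ 2 = l ^ 2 := by
    rw [hσ, div_pow, Real.sq_sqrt hd0.le]; field_simp
  have hdσ3 : d * σ ^ 3 = l ^ 3 * (1 / √(d:ℝ)) := by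
    calc d * σ ^ 3 = d * σ ^ 2 * σ := by ring
      _ = _ := by rw [hdσ2, hσ]; ring
  obtain ⟨hF0, hFu⟩ := acceptance_expansion (measurable_Srest h.meas σ x) hv hφ hT
  set p := stdCDF (-√(l ^ 2 * Jc ρ) / 2) with hp
  have hp0 : 0 ≤ p := stdCDF_nonneg _
  have hp1 : p ≤ 1 := stdCDF_le_one _
  set F0 := ∫ z, acc (Srest ρ σ x z) ∂(stdPi (Fin d)) with hF0def
  have hF01 : |F0| ≤ 1 := by
    have := norm_integral_le_of_norm_le_const (μ := stdPi (Fin d))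
      (f := fun z => acc (Srest ρ σ x z)) (C := 1) (ae_of_all _ fun z => abs_acc_le _)
    simpa using this
  set w := Real.exp (1 / 4 * |x 0|) with hw
  have hw1 : 1 ≤ w := Real.one_le_exp (by positivity)
  have hw2 : Real.exp (1 / 2 * |x 0|) = w ^ 2 := by
    rw [hw, ← Real.exp_nat_mul]; congr 1; push_cast; ring
  have hw4 : Real.exp |x 0| = w ^ 4 := by
    rw [hw, ← Real.exp_nat_mul]; congr 1; push_cast; ring
  set R := 6 * N * w ^ 4 * (Q1 * σ ^ 3 + Q2 * σ ^ 2 * δ) with hR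
  have sf := fun t => tf.scaled (by norm_num) (by norm_num) hN0 hσ0 hσl (x 0) t
  have sL := fun t => tL.scaled (by norm_num) (by norm_num) hA.le hσ0 hσl (x 0) t
  set FD : ℝ → ℝ := fun t => ∫ z, acc (Real.log (ρ (x 0 + σ * t)) - Real.log (ρ (x 0))
        + Srest ρ σ x z) ∂(stdPi (Fin d)) with hFD
  set m1 := F0 * deriv f (x 0) * σ with hm1
  set m2 := p * (deriv (deriv f) (x 0) + deriv f (x 0) * dl ρ (x 0)) * σ ^ 2 with hm2
  have hpt : ∀ t, |(f (x 0 + σ * t) - f (x 0)) * FD t - (m1 * t + m2 * t ^ 2)|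
      ≤ R * Real.exp (3 * (l + 1) * |t|) := by
    intro t
    obtain ⟨-, f1, -, f3, f4⟩ := sf t
    obtain ⟨-, L1, -, L3, -⟩ := sL t
    rw [hw2] at f1 f3 f4
    rw [← hw] at L1 L3
    have hfpp : |deriv (deriv f) (x 0)| ≤ 6 * N * w ^ 2 := by
      have := tf.b2 (x 0)
      rw [hw2] at this
      have h0 : 0 ≤ N * w ^ 2 := by positivity
      linarith
    have hLp : |dl ρ (x 0)| ≤ 6 * A * w := by
      have := tL.b1 (x 0)
      rw [← hw] at this
      have h0 : 0 ≤ A * w := by positivity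
      linarith
    have ht : |t| ≤ Real.exp ((l + 1) * |t|) :=
      (abs_le_exp_abs t).trans (Real.exp_le_exp.2 (by nlinarith [abs_nonneg t]))
    have hE1 : 1 ≤ Real.exp ((l + 1) * |t|) := Real.one_le_exp (by positivity)
    have key := increment_bound hσ0 hδ hC.le (by positivity) (by positivity) hE1 hp0 hp1 ht hF01
      f1 f3 f4 L1 L3 hfpp hLp hF0 (hFu _)
    have hE3 : Real.exp ((l + 1) * |t|) ^ 3 = Real.exp (3 * (l + 1) * |t|) := by
      rw [← Real.exp_nat_mul]; congr 1; push_cast; ring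
    rw [hE3] at key
    refine key.trans ?_
    have hww : w ≤ w ^ 2 := le_self_pow₀ hw1 (by norm_num)
    have hw1' : 1 ≤ w ^ 2 := hw1.trans hww
    have q1 : 1 + 2 * (6 * A * w) + C * (6 * A * w) ^ 2 ≤ Q1 * w ^ 2 := by
      have := mul_le_mul_of_nonneg_left hww hA.le
      rw [hQ1]; nlinarith
    have q2 : 1 + 6 * A * w ≤ Q2 * w ^ 2 := by
      have := mul_le_mul_of_nonneg_left hww hA.le
      rw [hQ2]; nlinarith
    calc _ ≤ 6 * N * w ^ 2 * (Q1 * w ^ 2) * σ ^ 3 * Real.exp (3 * (l + 1) * |t|)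
          + 6 * N * w ^ 2 * (Q2 * w ^ 2) * σ ^ 2 * δ * Real.exp (3 * (l + 1) * |t|) := by gcongr
      _ = _ := by rw [hR]; ring
  have it1 : Integrable (fun t => m1 * t) stdG :=
    (integrable_of_exp_bound (C := 1) (c := 1) (by fun_prop)
      fun t => by simpa using abs_le_exp_abs t).const_mul m1
  have it2 : Integrable (fun t => m2 * t ^ 2) stdG :=
    (integrable_of_exp_bound (C := 1) (c := 2) (by fun_prop) fun t => by
      have h0 : Real.exp (2 * |t|) = Real.exp |t| ^ 2 := by
        rw [← Real.exp_nat_mul]; norm_num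
      rw [abs_pow, one_mul, h0]
      gcongr
      exact abs_le_exp_abs t).const_mul m2
  have hfc : Continuous f := hf.1.continuous
  have hLc : Continuous fun y => Real.log (ρ y) := h.diff.continuous
  have hFDm : Measurable FD := by
    have hS := measurable_Srest h.meas σ x
    have hm := h.meas
    have ham : Measurable acc := continuous_acc.measurable
    have : Measurable fun q : ℝ × (Fin d → ℝ) =>
      acc (Real.log (ρ (x 0 + σ * q.1)) - Real.log (ρ (x 0)) + Srest ρ σ x q.2) := by fun_prop
    exact this.stronglyMeasurable.integral_prod_right.measurable
  have iR : Integrable (fun t => (f (x 0 + σ * t) - f (x 0)) * FD t - (m1 * t + m2 * t ^ 2))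
      stdG := by
    have hfm := hfc.measurable
    exact integrable_of_exp_bound (by fun_prop) hpt
  have hGd := Gd_eq h l hfc x fun t => (sf t).2.1
  have hGop : Gop ρ l f (x 0) = d * ∫ t, (m1 * t + m2 * t ^ 2) ∂stdG := by
    rw [integral_add it1 it2, integral_const_mul, integral_const_mul, integral_id_stdG,
      integral_sq_stdG, Gop, hc]
    have e1 : -(l * √(Jc ρ)) / 2 = -√(l ^ 2 * Jc ρ) / 2 := by
      rw [Real.sqrt_mul (by positivity), Real.sqrt_sq hl.le]
    rw [e1, ← hp, hm2]
    linear_combination -(p * (deriv (deriv f) (x 0) + deriv f (x 0) * dl ρ (x 0))) * hdσ2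
  have hdiff : Gd ρ l d f x - Gop ρ l f (x 0)
      = d * ∫ t, ((f (x 0 + σ * t) - f (x 0)) * FD t - (m1 * t + m2 * t ^ 2)) ∂stdG := by
    have iM : Integrable (fun t => m1 * t + m2 * t ^ 2) stdG := it1.add it2
    have iT : Integrable (fun t => (f (x 0 + σ * t) - f (x 0)) * FD t) stdG :=
      (iR.add iM).congr (ae_of_all _ fun t => by simp)
    rw [hGd, hGop, integral_sub iT iM, mul_sub]
  rw [abs_sub_comm, hdiff, abs_mul, abs_of_pos hd0]
  have hint : |∫ t, ((f (x 0 + σ * t) - f (x 0)) * FD t - (m1 * t + m2 * t ^ 2)) ∂stdG|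
      ≤ R * I := by
    rw [hI, ← integral_const_mul]
    rw [← Real.norm_eq_abs]
    refine norm_integral_le_of_norm_le ((integrable_exp_abs _).const_mul R)
      (ae_of_all _ fun t => ?_)
    exact hpt t
  have hr0 : 0 ≤ 1 / √(d:ℝ) := by positivity
  have hfin : 6 * I * (Q1 * l ^ 3 * (1 / √(d:ℝ)) + Q2 * l ^ 2 * δ)
      ≤ (6 * I * (Q1 * l ^ 3 + Q2 * l ^ 2) + 1) * (1 / √(d:ℝ) + δ) := by
    have z1 : 0 ≤ I * (Q1 * l ^ 3 * δ) := by positivity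
    have z2 : 0 ≤ I * (Q2 * l ^ 2 * (1 / √(d:ℝ))) := by positivity
    nlinarith
  calc d * |∫ t, ((f (x 0 + σ * t) - f (x 0)) * FD t - (m1 * t + m2 * t ^ 2)) ∂stdG|
      ≤ d * (R * I) := by gcongr
    _ = N * w ^ 4 * (6 * I * (Q1 * (d * σ ^ 3) + Q2 * (d * σ ^ 2) * δ)) := by rw [hR]; ring
    _ = N * w ^ 4 * (6 * I * (Q1 * l ^ 3 * (1 / √(d:ℝ)) + Q2 * l ^ 2 * δ)) := by
        rw [hdσ2, hdσ3]; ring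
    _ ≤ N * w ^ 4 * ((6 * I * (Q1 * l ^ 3 + Q2 * l ^ 2) + 1) * (1 / √(d:ℝ) + δ)) := by
        exact mul_le_mul_of_nonneg_left hfin (by positivity)
    _ = _ := by rw [hw4]; ring

/-- **Theorem (main technical result).** For a sluggish sequence `a` there are constants
`c₃, C₃ > 0` and measurable sets `𝒜_d ⊆ ℝ^d` with `ρ_d(𝒜_dᶜ) ≤ c₃ e^{-a_d²}` such that
`|G f(x₁) - G_d f(x)| ≤ C₃ (Σ_{i=1}^3 ‖f⁽ⁱ⁾‖_{∞,1/2}) e^{|x₁|} a_d / √d` on `𝒜_d`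
for every `f ∈ S³`. -/
theorem stmt0 (ρ : ℝ → ℝ) (hmeas : Measurable ρ) (hpos : ∀ x, 0 < ρ x)
    (hint : ∫ x, ρ x = 1) (hlog : MemS 4 fun x => Real.log (ρ x))
    (htail : SuperExpTails ρ) (l : ℝ) (hl : 0 < l)
    (a : ℕ → ℝ) (ha : Sluggish a) :
    ∃ c₃ > (0:ℝ), ∃ C₃ > (0:ℝ), ∃ 𝒜 : (d : ℕ) → Set (Fin d → ℝ),
      (∀ d : ℕ, MeasurableSet (𝒜 d)) ∧
      (∀ d : ℕ, pm ρ d ((𝒜 d)ᶜ) ≤ ENNReal.ofReal (c₃ * Real.exp (-(a d) ^ 2))) ∧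
      (∀ (d : ℕ) [NeZero d], ∀ f : ℝ → ℝ, MemS 3 f → ∀ x ∈ 𝒜 d,
        |Gop ρ l f (x 0) - Gd ρ l d f x| ≤
          C₃ * (∑ i ∈ Finset.Icc 1 3, normIS (iteratedDeriv i f) (1/2)) *
            Real.exp |x 0| * (a d / Real.sqrt d)) := by
  have h : Target ρ := ⟨hmeas, hpos, hint, hlog, htail⟩
  obtain ⟨K, hK, c, hc, hprob⟩ := good_prob h ha
  obtain ⟨C, hC, hst⟩ := stein_good h hl ha hK
  obtain ⟨Q, hQ, hgen⟩ := generator_bound h hl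
  obtain ⟨m, hm, hma⟩ := ha.lower
  refine ⟨c, hc, Q * (1 / m + C), by positivity, Good ρ K a, measurableSet_good h K a, hprob,
    fun d hd f hf x hx => ?_⟩
  have had := ha.1 d
  have hδ : 0 ≤ C * (a d / √(d:ℝ)) := by positivity
  refine (hgen d f hf x _ hδ (hst d (Nat.one_le_iff_ne_zero.2 hd.out) x hx)).trans ?_
  set N := ∑ i ∈ Finset.Icc 1 3, normIS (iteratedDeriv i f) (1/2)
  have hN0 : 0 ≤ N := Finset.sum_nonneg fun i _ => normIS_nonneg _ _
  -- `a` is bounded below, so the Taylor error `1 / √d` is absorbed by `a d / √d`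
  have h1 : 1 / √(d:ℝ) ≤ 1 / m * (a d / √(d:ℝ)) := by
    rw [← mul_div_assoc]
    gcongr
    rw [one_div, inv_mul_eq_div, one_le_div hm]
    exact hma d
  calc Q * N * Real.exp |x 0| * (1 / √(d:ℝ) + C * (a d / √(d:ℝ)))
      ≤ Q * N * Real.exp |x 0| * (1 / m * (a d / √(d:ℝ)) + C * (a d / √(d:ℝ))) := by gcongr
    _ = _ := by ring
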